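/- arXiv:1801.02182 — 2 statements merged into one kernel-verified Lean document; each statement's English description precedes it below -/
import Mathlib

section
/- ∫₀¹ [₂F₁(−1/3,1/3;1|x)]²·(1−x)^{−1/2} dx = (3/√π)·[ (√3/128)·(Γ(1/3)/√π)⁹·₄F₃(−1/2,1/6,1/3,4/3; −1/6,5/6,5/3 | 1) + (80/21)·(√π/Γ(1/3))⁹·₄F₃(−7/6,−1/2,−1/3,2/3; −5/6,1/6,1/3 | 1) ]. -/
open Real MeasureTheory Set

/-- Modified Bessel function `I₀(t) = (1/π)∫₀^π exp(t cos θ) dθ`. -/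
noncomputable def I0 (t : ℝ) : ℝ := (1 / π) * ∫ θ in (0:ℝ)..π, exp (t * cos θ)

/-- Modified Bessel function `K₀(t) = ∫₀^∞ exp(−t cosh u) du`. -/
noncomputable def K0 (t : ℝ) : ℝ := ∫ u in Ioi (0:ℝ), exp (-(t * Real.cosh u))

/-- Rising factorial `(a)ₙ = a(a+1)⋯(a+n−1)`. -/
noncomputable def ris (a : ℝ) (n : ℕ) : ℝ := ∏ k ∈ Finset.range n, (a + k)

/-- Generalized hypergeometric series `ₚF_q(a; b | x)`. -/
noncomputable def pFq (a b : List ℝ) (x : ℝ) : ℝ :=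
  ∑' n : ℕ, ((a.map fun p => ris p n).prod / (b.map fun q => ris q n).prod) * x ^ n
    / (n.factorial : ℝ)

open Filter Topology

lemma summable_sq_shift (x : ℝ) : Summable (fun n : ℤ => 1 / ((n : ℝ) + x) ^ 2) := by
  have := (Real.summable_one_div_int_add_rpow x 2).mpr (by norm_num)
  refine this.congr fun n => ?_
  norm_num [sq_abs]

lemma summable_prod_shift (x z : ℝ) : Summable (fun n : ℤ => 1 / (|(n : ℝ) + x| * |n + z|)) := by
  refine Summable.of_nonneg_of_le (fun n => by positivity) (fun n => ?_)
    ((summable_sq_shift x).add (summable_sq_shift z))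
  rw [← sq_abs, ← sq_abs ((n : ℝ) + z)]
  generalize |(n : ℝ) + x| = a
  generalize |(n : ℝ) + z| = b
  rw [one_div, mul_inv, one_div, one_div, ← inv_pow, ← inv_pow]
  nlinarith [sq_nonneg (a⁻¹ - b⁻¹), sq_nonneg (a⁻¹), sq_nonneg (b⁻¹)]

lemma cot_hasSum (x : ℝ) (hx : ∀ n : ℤ, (n : ℝ) + x ≠ 0) :
    HasSum (fun n : ℕ => 1 / (x - (n + 1)) + 1 / (x + (n + 1))) (π * Real.cot (π * x) - 1 / x) := by
  have hz : (x : ℂ) ∈ Complex.integerComplement := by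
    rintro ⟨n, hn⟩
    have : (n : ℝ) = x := by exact_mod_cast hn
    exact hx (-n) (by push_cast; linarith)
  have h1 := cot_series_rep' hz
  have h2 := (summable_cotTerm hz).hasSum
  have h3 : HasSum (fun n : ℕ => (1 / ((x : ℂ) - (n + 1)) + 1 / (x + (n + 1))))
    (π * Complex.cot (π * x) - 1 / x) := by
    rw [h1]; exact h2
  rw [← Complex.hasSum_ofReal]
  convert h3 using 1
  · ext n; push_cast; rfl
  · push_cast; rfl

lemma cot_hasSum_int (x z : ℝ) (hx : ∀ n : ℤ, (n : ℝ) + x ≠ 0) (hz : ∀ n : ℤ, (n : ℝ) + z ≠ 0) :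
    HasSum (fun n : ℤ => 1 / ((n : ℝ) + x) - 1 / (n + z))
      (π * Real.cot (π * x) - π * Real.cot (π * z)) := by
  have hs : Summable (fun n : ℤ => 1 / ((n : ℝ) + x) - 1 / (n + z)) := by
    refine Summable.of_norm ?_
    refine ((summable_prod_shift x z).mul_left |z - x|).congr fun n => ?_
    have a := hx n
    have b := hz n
    rw [Real.norm_eq_abs, ← abs_mul, mul_one_div, ← abs_div]
    congr 1
    field_simp
    ring
  have h1 := hs.hasSum.nat_add_neg
  rw [← hasSum_nat_add_iff' 1] at h1
  have h2 := (cot_hasSum x hx).sub (cot_hasSum z hz)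
  have h3 := h2.unique (by
    convert h1 using 1
    ext n
    push_cast
    have e1 : (x - ((n:ℝ) + 1)) = -(n + 1) + x := by ring
    have e2 : (z - ((n:ℝ) + 1)) = -(n + 1) + z := by ring
    rw [e1, e2, add_comm x, add_comm z]
    ring)
  convert hs.hasSum using 1
  simp at h3
  simp only [one_div]
  linarith

lemma third_ne (n : ℤ) (m : ℤ) : (n : ℝ) + (1 / 3 + m) ≠ 0 := by
  intro h
  have : (3 * n + 1 + 3 * m : ℝ) = 0 := by linarith
  have : (3 * n + 1 + 3 * m : ℤ) = 0 := by exact_mod_cast this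
  omega

lemma third_half_ne (n : ℤ) (m : ℤ) : (n : ℝ) + (1 / 3 + m + 1 / 2) ≠ 0 := by
  intro h
  have : (6 * n + 5 + 6 * m : ℝ) = 0 := by linarith
  have : (6 * n + 5 + 6 * m : ℤ) = 0 := by exact_mod_cast this
  omega

lemma base_sum (a b : ℤ) : HasSum (fun n : ℤ => 1 / ((n : ℝ) + 1 / 3 + a) - 1 / (n + 1 / 3 + b + 1 / 2))
    (4 * π / √3) := by
  have h := cot_hasSum_int (1 / 3 + a) (1 / 3 + b + 1 / 2) (fun n => third_ne n a)
    (fun n => third_half_ne n b)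
  convert h using 1
  · ext n; congr 2 <;> ring
  · have e1 : Real.cot (π * (1 / 3 + a)) = 1 / √3 := by
      rw [Real.cot_eq_cos_div_sin]
      have : π * (1 / 3 + a) = π / 3 + a * π := by ring
      rw [this, Real.cos_add_int_mul_pi, Real.sin_add_int_mul_pi, Real.cos_pi_div_three,
        Real.sin_pi_div_three]
      have : ((-1 : ℝ) ^ a) ≠ 0 := zpow_ne_zero _ (by norm_num)
      field_simp
    have e2 : Real.cot (π * (1 / 3 + b + 1 / 2)) = - √3 := by
      rw [Real.cot_eq_cos_div_sin]
      have : π * (1 / 3 + b + 1 / 2) = (π / 3 + π / 2) + b * π := by ring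
      rw [this, Real.cos_add_int_mul_pi, Real.sin_add_int_mul_pi, Real.cos_add_pi_div_two,
        Real.sin_add_pi_div_two, Real.cos_pi_div_three,
        Real.sin_pi_div_three]
      have : ((-1 : ℝ) ^ b) ≠ 0 := zpow_ne_zero _ (by norm_num)
      field_simp
    rw [e1, e2]
    have : √3 ^ 2 = 3 := Real.sq_sqrt (by norm_num)
    field_simp
    rw [this]; norm_num

lemma sumXX (m : ℤ) (c : ℝ) (hm : 2 * c = m) :
    HasSum (fun n : ℤ => 1 / ((n : ℝ) + 1 / 3 + c) ^ 2 - 1 / (c - (n + 1 / 3)) ^ 2) 0 := by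
  have h2 := (summable_sq_shift (1 / 3 - c)).hasSum
  have h1 := (Equiv.addRight m).hasSum_iff.mpr h2
  have h := h1.sub h2
  rw [sub_self] at h
  refine h.congr_fun ?_
  intro n
  simp only [Function.comp, Equiv.coe_addRight, Int.cast_add, ← hm]
  congr 2
  · ring
  · ring

noncomputable def rho : ℝ := √3 / (8 * π)

lemma q_ne (n : ℤ) (m : ℤ) : (n : ℝ) + 1 / 3 + m ≠ 0 := by
  rw [add_assoc]; exact third_ne n m

lemma q_half_ne (n : ℤ) (m : ℤ) : (n : ℝ) + 1 / 3 + m + 1 / 2 ≠ 0 := by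
  have := third_half_ne n m
  intro h; apply this; linarith

lemma sumXY_alg (A B C D d : ℝ) (hA : A ≠ 0) (hB : B ≠ 0) (hC : C ≠ 0) (hD : D ≠ 0) (hd : d ≠ 0)
    (h1 : d = A - B) (h2 : d = C - D) :
    1 / (A * -B) - 1 / (-D * C) = 1 / d * (1 / A - 1 / B + (1 / D - 1 / C)) := by
  have e1 : 1 / A - 1 / B = - d / (A * B) := by rw [h1]; field_simp; ring
  have e2 : 1 / D - 1 / C = d / (C * D) := by rw [h2]; field_simp
  rw [e1, e2]
  field_simp
  ring

lemma sumXY (k j : ℕ) : HasSum (fun n : ℤ => 1 / (((n : ℝ) + 1 / 3 + k) * (1 / 6 - n + j)) -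
    1 / ((-((n : ℝ) + 1 / 3) + k) * (n + 5 / 6 + j))) (1 / (rho * (k + j + 1 / 2))) := by
  have h1 := base_sum k (-j - 1)
  have h2 := base_sum (-k) j
  have h := (h1.add h2).mul_left (1 / ((k : ℝ) + j + 1 / 2))
  have hv : 1 / (rho * (k + j + 1 / 2)) = 1 / ((k : ℝ) + j + 1 / 2) * (4 * π / √3 + 4 * π / √3) := by
    unfold rho
    have : √3 ^ 2 = 3 := Real.sq_sqrt (by norm_num)
    have : (k : ℝ) + j + 1 / 2 ≠ 0 := by positivity
    field_simp
    norm_num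
  rw [hv]
  refine h.congr_fun fun n => ?_
  · have a1 := q_ne n k
    have a2 := q_ne n (-k)
    have a3 := q_half_ne n j
    have a4 := q_half_ne n (-j - 1)
    have a5 : (k : ℝ) + j + 1 / 2 ≠ 0 := by positivity
    push_cast at *
    have b1 : (1 / 6 - (n : ℝ) + j) = - ((n : ℝ) + 1 / 3 + (-j - 1) + 1 / 2) := by ring
    have b2 : (-((n : ℝ) + 1 / 3) + k) = - ((n : ℝ) + 1 / 3 + (-k)) := by ring
    have b3 : (n + 5 / 6 + j : ℝ) = ((n : ℝ) + 1 / 3 + j + 1 / 2) := by ring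
    rw [b1, b2, b3]
    have e1 : (k : ℝ) + j + 1 / 2 = ((n : ℝ) + 1 / 3 + k) - ((n : ℝ) + 1 / 3 + (-j - 1) + 1 / 2) := by ring
    have e2 : (k : ℝ) + j + 1 / 2 = ((n : ℝ) + 1 / 3 + j + 1 / 2) - ((n : ℝ) + 1 / 3 + (-k)) := by ring
    exact sumXY_alg _ _ _ _ _ a1 a4 a3 a2 a5 e1 e2

lemma sumXX1 (k : ℕ) : HasSum (fun n : ℤ => 1 / ((n : ℝ) + 1 / 3 + k) ^ 2 -
    1 / (-((n : ℝ) + 1 / 3) + k) ^ 2) 0 := by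
  refine (sumXX (2 * k) k (by push_cast; ring)).congr_fun fun n => ?_
  rw [neg_add_eq_sub]

lemma sumYY1 (j : ℕ) : HasSum (fun n : ℤ => 1 / (1 / 6 - (n : ℝ) + j) ^ 2 -
    1 / (n + 5 / 6 + j : ℝ) ^ 2) 0 := by
  have h := (sumXX (2 * j + 1) (j + 1 / 2) (by push_cast; ring)).neg
  rw [neg_zero] at h
  refine h.congr_fun fun n => ?_
  rw [neg_sub]
  congr 2 <;> ring


noncomputable def ip (f g : ℝ → ℝ) : ℝ := 2 * ∫ v in (0:ℝ)..1, f (v ^ 2) * g (v ^ 2)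

inductive MRep : ℕ → (ℝ → ℝ) → (ℝ → ℝ) → Prop
  | pow {N : ℕ} (k : ℕ) (hk : k ≤ N) : MRep N (fun y => y ^ k) (fun s => 1 / (s + k))
  | log {N : ℕ} (k : ℕ) (h1 : 1 ≤ k) (hk : k ≤ N) :
      MRep N (fun y => -(y ^ k * Real.log y)) (fun s => 1 / (s + k) ^ 2)
  | add {N : ℕ} {f g φ γ : ℝ → ℝ} (h1 : MRep N f φ) (h2 : MRep N g γ) :
      MRep N (fun y => f y + g y) (fun s => φ s + γ s)
  | smul {N : ℕ} {f φ : ℝ → ℝ} (c : ℝ) (h1 : MRep N f φ) :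
      MRep N (fun y => c * f y) (fun s => c * φ s)
  | congr {N : ℕ} {f φ γ : ℝ → ℝ} (h1 : MRep N f φ)
      (h2 : ∀ s : ℝ, (∀ k : ℕ, s + k ≠ 0) → φ s = γ s) : MRep N f γ

lemma MRep.cont {N : ℕ} {f φ : ℝ → ℝ} (h : MRep N f φ) : Continuous f := by
  induction h with
  | pow k hk => fun_prop
  | log k h1 hk =>
    obtain ⟨m, rfl⟩ := Nat.exists_eq_add_of_le' h1
    have : (fun y : ℝ => -(y ^ (m + 1) * Real.log y)) = fun y => -(y ^ m * (y * Real.log y)) := by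
      ext y; ring
    rw [this]
    have := Real.continuous_mul_log
    fun_prop
  | add h1 h2 a b => exact a.add b
  | smul c h1 a => exact continuous_const.mul a
  | congr h1 h2 a => exact a

lemma MRep.mono {N M : ℕ} (hNM : N ≤ M) {f φ : ℝ → ℝ} (h : MRep N f φ) : MRep M f φ := by
  induction h with
  | pow k hk => exact MRep.pow k (hk.trans hNM)
  | log k h1 hk => exact MRep.log k h1 (hk.trans hNM)
  | add h1 h2 a b => exact a.add b
  | smul c h1 a => exact a.smul c
  | congr h1 h2 a => exact a.congr h2

lemma MRep.step {N : ℕ} {f φ : ℝ → ℝ} (h : MRep N f φ) :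
    ∃ g, MRep (N + 1) g (fun s => φ s * (1 / (s + (N + 1 : ℕ)) ^ 2)) := by
  induction h with
  | pow k hk =>
    have hm : ((N + 1 : ℕ) : ℝ) - k ≠ 0 := by
      have : (k : ℝ) ≤ N := by exact_mod_cast hk
      push_cast; linarith
    set m := ((N + 1 : ℕ) : ℝ) - k with hmd
    refine ⟨_, MRep.congr (((MRep.pow k (hk.trans (Nat.le_succ N))).smul (1 / m ^ 2)).add
      (((MRep.pow (N + 1) le_rfl).smul (-(1 / m ^ 2))).add
      ((MRep.log (N + 1) (by omega) le_rfl).smul (-(1 / m))))) ?_⟩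
    intro s hs
    have h1 := hs k
    have h2 := hs (N + 1)
    have h3 : s + ((N + 1 : ℕ) : ℝ) = s + k + m := by rw [hmd]; ring
    rw [h3] at h2
    simp only [h3]
    generalize s + (k : ℝ) = X at *
    field_simp
    ring
  | log k h1 hk =>
    have hm : ((N + 1 : ℕ) : ℝ) - k ≠ 0 := by
      have : (k : ℝ) ≤ N := by exact_mod_cast hk
      push_cast; linarith
    set m := ((N + 1 : ℕ) : ℝ) - k with hmd
    refine ⟨_, MRep.congr ((((MRep.log k h1 (hk.trans (Nat.le_succ N))).smul (1 / m ^ 2)).add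
      ((MRep.log (N + 1) (by omega) le_rfl).smul (1 / m ^ 2))).add
      (((MRep.pow k (hk.trans (Nat.le_succ N))).smul (-(2 / m ^ 3))).add
      ((MRep.pow (N + 1) le_rfl).smul (2 / m ^ 3)))) ?_⟩
    intro s hs
    have h1 := hs k
    have h2 := hs (N + 1)
    have h3 : s + ((N + 1 : ℕ) : ℝ) = s + k + m := by rw [hmd]; ring
    rw [h3] at h2
    simp only [h3]
    generalize s + (k : ℝ) = X at *
    field_simp
    ring
  | add h1 h2 a b =>
    obtain ⟨g1, a⟩ := a
    obtain ⟨g2, b⟩ := b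
    exact ⟨_, (a.add b).congr fun s hs => by ring⟩
  | smul c h1 a =>
    obtain ⟨g1, a⟩ := a
    exact ⟨_, (a.smul c).congr fun s hs => by ring⟩
  | congr h1 h2 a =>
    obtain ⟨g1, a⟩ := a
    exact ⟨_, a.congr fun s hs => by rw [h2 s hs]⟩

noncomputable def phiN (N : ℕ) (s : ℝ) : ℝ :=
  1 / s * ∏ k ∈ Finset.range N, (1 - 1 / (9 * (s + (k + 1 : ℕ)) ^ 2))

lemma exists_rep (N : ℕ) : ∃ f, MRep N f (phiN N) := by
  induction N with
  | zero => exact ⟨_, (MRep.pow 0 le_rfl).congr fun s hs => by simp [phiN]⟩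
  | succ N ih =>
    obtain ⟨f, hf⟩ := ih
    obtain ⟨g, hg⟩ := hf.step
    refine ⟨_, ((hf.mono (Nat.le_succ N)).add (hg.smul (-(1 / 9)))).congr fun s hs => ?_⟩
    have := hs (N + 1)
    simp only [phiN, Finset.prod_range_succ]
    field_simp
    ring

lemma int_pow (m : ℕ) : ∫ v in (0:ℝ)..1, v ^ m = 1 / (m + 1) := by
  simp [integral_pow]

lemma cont_pow_log (m : ℕ) : Continuous (fun v : ℝ => v ^ (m + 1) * Real.log v) := by
  have : (fun y : ℝ => (y ^ (m + 1) * Real.log y)) = fun y => (y ^ m * (y * Real.log y)) := by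
    ext y; ring
  rw [this]
  have := Real.continuous_mul_log
  fun_prop

lemma cont_pow_log2 (m : ℕ) : Continuous (fun v : ℝ => v ^ (m + 2) * Real.log v ^ 2) := by
  have : (fun y : ℝ => (y ^ (m + 2) * Real.log y ^ 2)) = fun y => (y ^ m * (y * Real.log y) ^ 2) := by
    ext y; ring
  rw [this]
  have := Real.continuous_mul_log
  fun_prop

lemma int_pow_log (m : ℕ) : ∫ v in (0:ℝ)..1, v ^ (m + 1) * Real.log v = -1 / ((m : ℝ) + 2) ^ 2 := by
  have hc : Continuous (fun v : ℝ => v ^ (m + 2) * Real.log v / (m + 2) - v ^ (m + 2) / (m + 2) ^ 2) := by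
    have := cont_pow_log (m + 1)
    fun_prop
  have h2 : ((m : ℝ) + 2) ≠ 0 := by positivity
  have := intervalIntegral.integral_eq_sub_of_hasDerivAt_of_le zero_le_one hc.continuousOn
    (f' := fun v : ℝ => v ^ (m + 1) * Real.log v) (fun v hv => by
      have hv0 : v ≠ 0 := hv.1.ne'
      have h1 := (((hasDerivAt_pow (m + 2) v).mul (Real.hasDerivAt_log hv0)).div_const (m + 2 : ℝ)).sub
        ((hasDerivAt_pow (m + 2) v).div_const ((m + 2 : ℝ) ^ 2))
      refine h1.congr_deriv ?_
      simp only [show m + 2 - 1 = m + 1 by omega]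
      push_cast
      field_simp
      ring) ((cont_pow_log m).intervalIntegrable _ _)
  rw [this]
  simp
  field_simp

lemma int_pow_log2 (m : ℕ) : ∫ v in (0:ℝ)..1, v ^ (m + 2) * Real.log v ^ 2 = 2 / ((m : ℝ) + 3) ^ 3 := by
  have hc : Continuous (fun v : ℝ => v ^ (m + 3) * Real.log v ^ 2 / (m + 3)
      - 2 * (v ^ (m + 3) * Real.log v) / (m + 3) ^ 2 + 2 * v ^ (m + 3) / (m + 3) ^ 3) := by
    have := cont_pow_log (m + 2)
    have := cont_pow_log2 (m + 1)
    fun_prop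
  have h2 : ((m : ℝ) + 3) ≠ 0 := by positivity
  have := intervalIntegral.integral_eq_sub_of_hasDerivAt_of_le zero_le_one hc.continuousOn
    (f' := fun v : ℝ => v ^ (m + 2) * Real.log v ^ 2) (fun v hv => by
      have hv0 : v ≠ 0 := hv.1.ne'
      have hp := hasDerivAt_pow (m + 3) v
      have hl := Real.hasDerivAt_log hv0
      have h1 := (((hp.mul (hl.pow 2)).div_const (m + 3 : ℝ)).sub
        (((hp.mul hl).const_mul 2).div_const ((m + 3 : ℝ) ^ 2))).add
        ((hp.const_mul 2).div_const ((m + 3 : ℝ) ^ 3))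
      refine h1.congr_deriv ?_
      simp only [Pi.pow_apply, show m + 3 - 1 = m + 2 by omega]
      push_cast
      field_simp
      ring) ((cont_pow_log2 m).intervalIntegrable _ _)
  rw [this]
  simp


lemma ip_comm (f g : ℝ → ℝ) : ip f g = ip g f := by
  unfold ip; simp only [mul_comm]

lemma ip_add (f g h : ℝ → ℝ) (hf : ContinuousOn f (Icc 0 1)) (hg : ContinuousOn g (Icc 0 1))
    (hh : ContinuousOn h (Icc 0 1)) :
    ip (fun y => f y + g y) h = ip f h + ip g h := by
  have hm : MapsTo (fun v : ℝ => v ^ 2) (Icc 0 1) (Icc 0 1) := fun v hv =>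
    ⟨by have := hv.1; positivity, pow_le_one₀ hv.1 hv.2⟩
  have hv : ContinuousOn (fun v : ℝ => v ^ 2) (Icc 0 1) := by fun_prop
  have key : ∀ f : ℝ → ℝ, ContinuousOn f (Icc 0 1) →
      IntervalIntegrable (fun v => f (v ^ 2) * h (v ^ 2)) volume 0 1 := fun f hf => by
    apply ContinuousOn.intervalIntegrable
    rw [uIcc_of_le zero_le_one]
    exact (hf.comp hv hm).mul (hh.comp hv hm)
  unfold ip
  simp only [add_mul]
  rw [intervalIntegral.integral_add (key f hf) (key g hg)]
  ring

lemma ip_smul (c : ℝ) (f h : ℝ → ℝ) : ip (fun y => c * f y) h = c * ip f h := by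
  unfold ip
  simp only [mul_assoc, intervalIntegral.integral_const_mul]
  ring

noncomputable def tm (φ γ : ℝ → ℝ) (n : ℤ) : ℝ :=
  φ ((n : ℝ) + 1 / 3) * γ (1 / 6 - n) - φ (-((n : ℝ) + 1 / 3)) * γ (n + 5 / 6)

lemma ip_pow_pow (k j : ℕ) : ip (fun y => y ^ k) (fun y => y ^ j) = 1 / ((k : ℝ) + j + 1 / 2) := by
  unfold ip
  have : ∀ v : ℝ, (v ^ 2) ^ k * (v ^ 2) ^ j = v ^ (2 * (k + j)) := fun v => by ring
  simp only [this, int_pow]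
  push_cast
  field_simp

lemma ip_pow_log (k j : ℕ) (hj : 1 ≤ j) : ip (fun y => y ^ k) (fun y => -(y ^ j * Real.log y))
    = 1 / ((k : ℝ) + j + 1 / 2) ^ 2 := by
  unfold ip
  obtain ⟨i, rfl⟩ := Nat.exists_eq_add_of_le' hj
  have : ∀ v : ℝ, (v ^ 2) ^ k * -((v ^ 2) ^ (i + 1) * Real.log (v ^ 2)) =
    (-2) * (v ^ ((2 * (k + i) + 1) + 1) * Real.log v) := fun v => by
      rw [Real.log_pow]; push_cast; ring
  simp only [this]
  rw [intervalIntegral.integral_const_mul, int_pow_log]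
  push_cast
  field_simp
  ring

lemma ip_log_log (k j : ℕ) (hk : 1 ≤ k) (hj : 1 ≤ j) :
    ip (fun y => -(y ^ k * Real.log y)) (fun y => -(y ^ j * Real.log y))
    = 2 / ((k : ℝ) + j + 1 / 2) ^ 3 := by
  unfold ip
  obtain ⟨i, rfl⟩ := Nat.exists_eq_add_of_le' hj
  obtain ⟨l, rfl⟩ := Nat.exists_eq_add_of_le' hk
  have : ∀ v : ℝ, -((v ^ 2) ^ (l + 1) * Real.log (v ^ 2)) * -((v ^ 2) ^ (i + 1) * Real.log (v ^ 2)) =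
    4 * (v ^ ((2 * (l + i) + 2) + 2) * Real.log v ^ 2) := fun v => by
      rw [Real.log_pow]; push_cast; ring
  simp only [this]
  rw [intervalIntegral.integral_const_mul, int_pow_log2]
  push_cast
  field_simp
  ring

lemma rho_ne : rho ≠ 0 := by unfold rho; positivity

lemma bi_pow_pow (k j : ℕ) : HasSum (tm (fun s => 1 / (s + k)) (fun s => 1 / (s + j)))
    (ip (fun y => y ^ k) (fun y => y ^ j) / rho) := by
  rw [ip_pow_pow]
  have h := sumXY k j
  rw [div_div, mul_comm _ rho]
  refine h.congr_fun fun n => ?_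
  simp only [tm]
  rw [one_div_mul_one_div, one_div_mul_one_div]

lemma nz (n : ℤ) (k : ℕ) : (n : ℝ) + 1 / 3 + k ≠ 0 ∧ -((n : ℝ) + 1 / 3) + k ≠ 0 ∧
    1 / 6 - (n : ℝ) + k ≠ 0 ∧ (n : ℝ) + 5 / 6 + k ≠ 0 := by
  have a1 := q_ne n k
  have a2 := q_ne n (-k)
  have a3 := q_half_ne n k
  have a4 := q_half_ne n (-k - 1)
  push_cast at *
  refine ⟨a1, fun h => a2 (by linarith), fun h => a4 (by linarith), fun h => a3 (by linarith)⟩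

lemma bi_pow_log (k j : ℕ) (hj : 1 ≤ j) : HasSum (tm (fun s => 1 / (s + k)) (fun s => 1 / (s + j) ^ 2))
    (ip (fun y => y ^ k) (fun y => -(y ^ j * Real.log y)) / rho) := by
  rw [ip_pow_log k j hj]
  have hd : (k : ℝ) + j + 1 / 2 ≠ 0 := by positivity
  have h := ((sumXY k j).add (sumYY1 j)).mul_left (1 / ((k : ℝ) + j + 1 / 2))
  have e : 1 / ((k : ℝ) + j + 1 / 2) * (1 / (rho * (k + j + 1 / 2)) + 0) =
    1 / ((k : ℝ) + j + 1 / 2) ^ 2 / rho := by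
    have := rho_ne
    field_simp
    ring
  rw [e] at h
  refine h.congr_fun fun n => ?_
  simp only [tm]
  obtain ⟨a1, a2, -, -⟩ := nz n k
  obtain ⟨-, -, a3, a4⟩ := nz n j
  have e1 : (k : ℝ) + j + 1 / 2 = ((n : ℝ) + 1 / 3 + k) + (1 / 6 - n + j) := by ring
  have e2 : (k : ℝ) + j + 1 / 2 = (-((n : ℝ) + 1 / 3) + k) + (n + 5 / 6 + j) := by ring
  generalize ((n : ℝ) + 1 / 3 + k) = A at *
  generalize (1 / 6 - (n : ℝ) + j) = B at *
  generalize (-((n : ℝ) + 1 / 3) + k) = C at *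
  generalize ((n : ℝ) + 5 / 6 + j) = D at *
  generalize (k : ℝ) + j + 1 / 2 = d at *
  have f1 : 1 / A * (1 / B ^ 2) = 1 / d * (1 / (A * B) + 1 / B ^ 2) := by
    rw [e1] at hd ⊢; field_simp; ring
  have f2 : 1 / C * (1 / D ^ 2) = 1 / d * (1 / (C * D) + 1 / D ^ 2) := by
    rw [e2] at hd ⊢; field_simp; ring
  rw [f1, f2]; ring

lemma bi_log_pow (k j : ℕ) (hk : 1 ≤ k) : HasSum (tm (fun s => 1 / (s + k) ^ 2) (fun s => 1 / (s + j)))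
    (ip (fun y => -(y ^ k * Real.log y)) (fun y => y ^ j) / rho) := by
  rw [ip_comm, ip_pow_log j k hk]
  have hd : (k : ℝ) + j + 1 / 2 ≠ 0 := by positivity
  have h := ((sumXY k j).add (sumXX1 k)).mul_left (1 / ((k : ℝ) + j + 1 / 2))
  have e : 1 / ((k : ℝ) + j + 1 / 2) * (1 / (rho * (k + j + 1 / 2)) + 0) =
    1 / ((j : ℝ) + k + 1 / 2) ^ 2 / rho := by
    have := rho_ne
    rw [add_comm (j : ℝ) k]
    field_simp
    ring
  rw [e] at h
  refine h.congr_fun fun n => ?_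
  simp only [tm]
  obtain ⟨a1, a2, -, -⟩ := nz n k
  obtain ⟨-, -, a3, a4⟩ := nz n j
  have e1 : (k : ℝ) + j + 1 / 2 = ((n : ℝ) + 1 / 3 + k) + (1 / 6 - n + j) := by ring
  have e2 : (k : ℝ) + j + 1 / 2 = (-((n : ℝ) + 1 / 3) + k) + (n + 5 / 6 + j) := by ring
  generalize ((n : ℝ) + 1 / 3 + k) = A at *
  generalize (1 / 6 - (n : ℝ) + j) = B at *
  generalize (-((n : ℝ) + 1 / 3) + k) = C at *
  generalize ((n : ℝ) + 5 / 6 + j) = D at *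
  generalize (k : ℝ) + j + 1 / 2 = d at *
  have f1 : 1 / A ^ 2 * (1 / B) = 1 / d * (1 / (A * B) + 1 / A ^ 2) := by
    rw [e1] at hd ⊢; field_simp
  have f2 : 1 / C ^ 2 * (1 / D) = 1 / d * (1 / (C * D) + 1 / C ^ 2) := by
    rw [e2] at hd ⊢; field_simp
  rw [f1, f2]; ring

lemma bi_log_log (k j : ℕ) (hk : 1 ≤ k) (hj : 1 ≤ j) :
    HasSum (tm (fun s => 1 / (s + k) ^ 2) (fun s => 1 / (s + j) ^ 2))
    (ip (fun y => -(y ^ k * Real.log y)) (fun y => -(y ^ j * Real.log y)) / rho) := by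
  rw [ip_log_log k j hk hj]
  have hd : (k : ℝ) + j + 1 / 2 ≠ 0 := by positivity
  have h := ((((sumXY k j).mul_left 2).add (sumXX1 k)).add (sumYY1 j)).mul_left
    (1 / ((k : ℝ) + j + 1 / 2) ^ 2)
  have e : 1 / ((k : ℝ) + j + 1 / 2) ^ 2 * (2 * (1 / (rho * (k + j + 1 / 2))) + 0 + 0) =
    2 / ((k : ℝ) + j + 1 / 2) ^ 3 / rho := by
    have := rho_ne
    field_simp
    ring
  rw [e] at h
  refine h.congr_fun fun n => ?_
  simp only [tm]
  obtain ⟨a1, a2, -, -⟩ := nz n k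
  obtain ⟨-, -, a3, a4⟩ := nz n j
  have e1 : (k : ℝ) + j + 1 / 2 = ((n : ℝ) + 1 / 3 + k) + (1 / 6 - n + j) := by ring
  have e2 : (k : ℝ) + j + 1 / 2 = (-((n : ℝ) + 1 / 3) + k) + (n + 5 / 6 + j) := by ring
  generalize ((n : ℝ) + 1 / 3 + k) = A at *
  generalize (1 / 6 - (n : ℝ) + j) = B at *
  generalize (-((n : ℝ) + 1 / 3) + k) = C at *
  generalize ((n : ℝ) + 5 / 6 + j) = D at *
  generalize (k : ℝ) + j + 1 / 2 = d at *
  have f1 : 1 / A ^ 2 * (1 / B ^ 2) = 1 / d ^ 2 * (2 * (1 / (A * B)) + 1 / A ^ 2 + 1 / B ^ 2) := by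
    rw [e1] at hd ⊢; field_simp; ring
  have f2 : 1 / C ^ 2 * (1 / D ^ 2) = 1 / d ^ 2 * (2 * (1 / (C * D)) + 1 / C ^ 2 + 1 / D ^ 2) := by
    rw [e2] at hd ⊢; field_simp; ring
  rw [f1, f2]; ring

lemma bi {N M : ℕ} {f g φ γ : ℝ → ℝ} (hf : MRep N f φ) (hg : MRep M g γ) :
    HasSum (tm φ γ) (ip f g / rho) := by
  induction hf with
  | pow k hk =>
    induction hg with
    | pow j hj => exact bi_pow_pow k j
    | log j h1 hj => exact bi_pow_log k j h1
    | @add f1 f2 φ1 φ2 h1 h2 a b =>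
      rw [ip_comm, ip_add _ _ _ h1.cont.continuousOn h2.cont.continuousOn
        (by fun_prop), ip_comm f1, ip_comm f2, add_div]
      refine (a.add b).congr_fun fun n => ?_
      simp only [tm]; ring
    | @smul f1 φ1 c h1 a =>
      rw [ip_comm, ip_smul, ip_comm f1, mul_div_assoc]
      refine (a.mul_left c).congr_fun fun n => ?_
      simp only [tm]; ring
    | congr h1 h2 a =>
      refine a.congr_fun fun n => ?_
      simp only [tm]
      rw [h2 _ (fun k => (nz n k).2.2.1), h2 _ (fun k => (nz n k).2.2.2)]
  | log k hk1 hk =>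
    induction hg with
    | pow j hj => exact bi_log_pow k j hk1
    | log j h1 hj => exact bi_log_log k j hk1 h1
    | @add f1 f2 φ1 φ2 h1 h2 a b =>
      rw [ip_comm, ip_add _ _ _ h1.cont.continuousOn h2.cont.continuousOn
        ((MRep.log k hk1 hk).cont.continuousOn), ip_comm f1, ip_comm f2, add_div]
      refine (a.add b).congr_fun fun n => ?_
      simp only [tm]; ring
    | @smul f1 φ1 c h1 a =>
      rw [ip_comm, ip_smul, ip_comm f1, mul_div_assoc]
      refine (a.mul_left c).congr_fun fun n => ?_
      simp only [tm]; ring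
    | congr h1 h2 a =>
      refine a.congr_fun fun n => ?_
      simp only [tm]
      rw [h2 _ (fun k => (nz n k).2.2.1), h2 _ (fun k => (nz n k).2.2.2)]
  | @add f1 f2 φ1 φ2 h1 h2 a b =>
    rw [ip_add _ _ _ h1.cont.continuousOn h2.cont.continuousOn hg.cont.continuousOn, add_div]
    refine (a.add b).congr_fun fun n => ?_
    simp only [tm]; ring
  | @smul f1 φ1 c h1 a =>
    rw [ip_smul, mul_div_assoc]
    refine (a.mul_left c).congr_fun fun n => ?_
    simp only [tm]; ring
  | congr h1 h2 a =>
    refine a.congr_fun fun n => ?_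
    simp only [tm]
    rw [h2 _ (fun k => (nz n k).1), h2 _ (fun k => (nz n k).2.1)]

/-- moments -/
lemma moment {N : ℕ} {f φ : ℝ → ℝ} (hf : MRep N f φ) (a : ℕ) :
    ip f (fun y => y ^ a) = φ (a + 1 / 2) := by
  induction hf with
  | pow k hk => rw [ip_pow_pow]; ring
  | log k h1 hk => rw [ip_comm, ip_pow_log a k h1]; ring
  | @add f1 f2 φ1 φ2 h1 h2 a b =>
    rw [ip_add _ _ _ h1.cont.continuousOn h2.cont.continuousOn (by fun_prop), a, b]
  | @smul f1 φ1 c h1 a => rw [ip_smul, a]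
  | congr h1 h2 a => rw [a, h2 _ (fun k => by positivity)]


lemma sq_maps : MapsTo (fun v : ℝ => v ^ 2) (Icc 0 1) (Icc 0 1) := fun v hv =>
    ⟨by have := hv.1; positivity, pow_le_one₀ hv.1 hv.2⟩

lemma comp_sq {f : ℝ → ℝ} (hf : ContinuousOn f (Icc 0 1)) :
    ContinuousOn (fun v => f (v ^ 2)) (uIcc (0:ℝ) 1) := by
  rw [uIcc_of_le zero_le_one]
  exact hf.comp (by fun_prop) sq_maps

lemma ip_near (h g p : ℝ → ℝ) (hh : ContinuousOn h (Icc 0 1)) (hg : ContinuousOn g (Icc 0 1))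
    (hp : ContinuousOn p (Icc 0 1)) (ε : ℝ) (hε : 0 ≤ ε) (hn : ∀ x ∈ Icc (0:ℝ) 1, |p x - g x| ≤ ε) :
    |ip h p - ip h g| ≤ ε * (1 + ip h h) := by
  have ch := comp_sq hh
  have cg := comp_sq hg
  have cp := comp_sq hp
  have i1 : IntervalIntegrable (fun v => h (v ^ 2) * p (v ^ 2)) volume 0 1 := (ch.mul cp).intervalIntegrable
  have i2 : IntervalIntegrable (fun v => h (v ^ 2) * g (v ^ 2)) volume 0 1 := (ch.mul cg).intervalIntegrable
  have i3 : IntervalIntegrable (fun v => h (v ^ 2) * h (v ^ 2)) volume 0 1 := (ch.mul ch).intervalIntegrable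
  unfold ip
  rw [← mul_sub, ← intervalIntegral.integral_sub i1 i2]
  have e1 : ε * (1 + 2 * ∫ v in (0:ℝ)..1, h (v ^ 2) * h (v ^ 2)) =
      2 * ∫ v in (0:ℝ)..1, (ε / 2 + ε * (h (v ^ 2) * h (v ^ 2))) := by
    rw [intervalIntegral.integral_add (by simp) (i3.const_mul ε), intervalIntegral.integral_const_mul]
    simp
    ring
  rw [e1, abs_mul, abs_two]
  refine mul_le_mul_of_nonneg_left ?_ (by norm_num)
  rw [← Real.norm_eq_abs]
  refine intervalIntegral.norm_integral_le_of_norm_le zero_le_one ?_ ?_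
  · refine Filter.Eventually.of_forall fun v hv => ?_
    have hv' := hn (v ^ 2) (sq_maps ⟨hv.1.le, hv.2⟩)
    rw [← mul_sub, Real.norm_eq_abs, abs_mul]
    have a1 : |h (v ^ 2)| * |p (v ^ 2) - g (v ^ 2)| ≤ |h (v ^ 2)| * ε :=
      mul_le_mul_of_nonneg_left hv' (abs_nonneg _)
    have a2 : h (v ^ 2) * h (v ^ 2) = |h (v ^ 2)| ^ 2 := by rw [sq_abs]; ring
    rw [a2]
    nlinarith [mul_nonneg hε (sq_nonneg (|h (v ^ 2)| - 1)), mul_nonneg hε (sq_nonneg (|h (v ^ 2)|))]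
  · exact (by simp : IntervalIntegrable (fun _ => ε / 2) volume (0:ℝ) 1).add (i3.const_mul ε)

lemma ip_self_nonneg (h : ℝ → ℝ) : 0 ≤ ip h h := by
  unfold ip
  refine mul_nonneg (by norm_num) (intervalIntegral.integral_nonneg zero_le_one fun v _ => mul_self_nonneg _)

lemma weak_poly (f : ℕ → ℝ → ℝ) (F : ℝ → ℝ) (hf : ∀ M, Continuous (f M))
    (hF : ContinuousOn F (Icc 0 1))
    (hm : ∀ a : ℕ, Tendsto (fun M => ip (f M) (fun y => y ^ a)) atTop (𝓝 (ip F (fun y => y ^ a))))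
    (p : Polynomial ℝ) :
    Tendsto (fun M => ip (f M) (fun y => p.eval y)) atTop (𝓝 (ip F (fun y => p.eval y))) := by
  induction p using Polynomial.induction_on' with
  | add p q hp hq =>
    simp only [Polynomial.eval_add]
    have : ∀ g : ℝ → ℝ, ContinuousOn g (Icc 0 1) →
      ip g (fun y => p.eval y + q.eval y) = ip g (fun y => p.eval y) + ip g (fun y => q.eval y) := by
      intro g hg
      rw [ip_comm, ip_add _ _ _ p.continuous.continuousOn q.continuous.continuousOn hg, ip_comm (fun y => p.eval y),
        ip_comm (fun y => q.eval y)]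
    rw [this F hF]
    simp only [this _ (hf _).continuousOn]
    exact hp.add hq
  | monomial n a =>
    simp only [Polynomial.eval_monomial]
    have : ∀ g : ℝ → ℝ, ip g (fun y => a * y ^ n) = a * ip g (fun y => y ^ n) := by
      intro g
      rw [ip_comm, ip_smul, ip_comm]
    simp only [this]
    exact (hm n).const_mul a

lemma weak_conv (f : ℕ → ℝ → ℝ) (F : ℝ → ℝ) (C : ℝ) (hf : ∀ M, Continuous (f M))
    (hC : ∀ M, ip (f M) (f M) ≤ C) (hF : ContinuousOn F (Icc 0 1))
    (hm : ∀ a : ℕ, Tendsto (fun M => ip (f M) (fun y => y ^ a)) atTop (𝓝 (ip F (fun y => y ^ a))))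
    (g : ℝ → ℝ) (hg : ContinuousOn g (Icc 0 1)) :
    Tendsto (fun M => ip (f M) g) atTop (𝓝 (ip F g)) := by
  rw [Metric.tendsto_atTop]
  intro ε hε
  have hC0 : 0 ≤ C := (ip_self_nonneg (f 0)).trans (hC 0)
  have hF0 := ip_self_nonneg F
  set K := (1 + C) + (1 + ip F F) with hK
  have hKp : 0 < K := by positivity
  obtain ⟨p, hp⟩ := exists_polynomial_near_of_continuousOn 0 1 g hg (ε / (2 * K)) (by positivity)
  have hw := weak_poly f F hf hF hm p
  rw [Metric.tendsto_atTop] at hw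
  obtain ⟨M0, hM0⟩ := hw (ε / 2) (by positivity)
  refine ⟨M0, fun M hM => ?_⟩
  have h1 := hM0 M hM
  have h2 := ip_near (f M) g (fun y => p.eval y) (hf M).continuousOn hg p.continuous.continuousOn
    (ε / (2 * K)) (by positivity) (fun x hx => (hp x hx).le)
  have h3 := ip_near F g (fun y => p.eval y) hF hg p.continuous.continuousOn
    (ε / (2 * K)) (by positivity) (fun x hx => (hp x hx).le)
  rw [Real.dist_eq] at h1 ⊢
  have h4 : ε / (2 * K) * (1 + ip (f M) (f M)) ≤ ε / (2 * K) * (1 + C) :=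
    mul_le_mul_of_nonneg_left (by linarith [hC M]) (by positivity)
  have h5 : ε / (2 * K) * (1 + C) + ε / (2 * K) * (1 + ip F F) = ε / 2 := by
    rw [← mul_add, ← hK]; field_simp
  rw [abs_le] at h2 h3
  rw [abs_lt] at h1 ⊢
  constructor <;> linarith [h1.1, h1.2, h2.1, h2.2, h3.1, h3.2]

noncomputable def phi (s : ℝ) : ℝ :=
  1 / s * (Real.Gamma (s + 1) ^ 2 / (Real.Gamma (s + 4 / 3) * Real.Gamma (s + 2 / 3)))

lemma phiN_eq (n : ℕ) (s : ℝ) (hs : ∀ k : ℕ, s + k ≠ 0) : phiN n s =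
    1 / s * ∏ k ∈ Finset.range n, ((s + 4 / 3 + k) * (s + 2 / 3 + k) / (s + 1 + k) ^ 2) := by
  unfold phiN
  congr 1
  refine Finset.prod_congr rfl fun k _ => ?_
  have h := hs (k + 1)
  have : s + 1 + k ≠ 0 := by push_cast at h; intro h'; apply h; linarith
  push_cast at *
  field_simp
  ring

lemma phiN_tendsto (s : ℝ) (hs : ∀ k : ℕ, s + k ≠ 0) :
    Tendsto (fun N => phiN N s) atTop (𝓝 (phi s)) := by
  by_cases h0 : Real.Gamma (s + 4 / 3) * Real.Gamma (s + 2 / 3) = 0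
  · have hp : phi s = 0 := by simp [phi, h0]
    rw [hp]
    have : ∃ j : ℕ, (s + 4 / 3 + j) * (s + 2 / 3 + j) = 0 := by
      rcases mul_eq_zero.mp h0 with h | h
      · obtain ⟨m, hm⟩ := (Real.Gamma_eq_zero_iff _).mp h
        exact ⟨m, by rw [hm]; ring⟩
      · obtain ⟨m, hm⟩ := (Real.Gamma_eq_zero_iff _).mp h
        exact ⟨m, by rw [hm]; ring⟩
    obtain ⟨j, hj⟩ := this
    refine tendsto_const_nhds.congr' ?_
    filter_upwards [eventually_gt_atTop j] with N hN
    rw [phiN_eq N s hs, Finset.prod_eq_zero (Finset.mem_range.mpr hN) (by rw [hj, zero_div]), mul_zero]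
  · rw [← tendsto_add_atTop_iff_nat 1]
    have h := (((Real.GammaSeq_tendsto_Gamma (s + 1)).pow 2).div
      ((Real.GammaSeq_tendsto_Gamma (s + 4 / 3)).mul (Real.GammaSeq_tendsto_Gamma (s + 2 / 3))) h0).const_mul
      (1 / s)
    refine h.congr' ?_
    filter_upwards [eventually_gt_atTop 0] with n hn
    rw [phiN_eq _ s hs, Finset.prod_div_distrib, Finset.prod_mul_distrib, Finset.prod_pow]
    simp only [Real.GammaSeq, Pi.div_apply]
    congr 1
    have hn' : (0:ℝ) < n := by exact_mod_cast hn
    have e : (n:ℝ) ^ (s + 4 / 3) * (n:ℝ) ^ (s + 2 / 3) = ((n:ℝ) ^ (s + 1)) ^ 2 := by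
      rw [← Real.rpow_add hn', ← Real.rpow_natCast, ← Real.rpow_mul hn'.le]
      congr 1; push_cast; ring
    have hf : ((n.factorial : ℕ) : ℝ) ≠ 0 := by positivity
    have hq : ((n:ℝ) ^ (s + 1)) ≠ 0 := by positivity
    rw [div_mul_div_comm, div_div_eq_mul_div]
    have e2 : (n:ℝ) ^ (s + 4 / 3) * n.factorial * ((n:ℝ) ^ (s + 2 / 3) * n.factorial) =
      ((n:ℝ) ^ (s + 1) * n.factorial) ^ 2 := by rw [mul_pow, ← e]; ring
    rw [e2, div_pow]
    field_simp

lemma prod_ite_le (N : ℕ) (s c : ℝ) :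
    ∏ k ∈ Finset.range N, (if s + (k + 1 : ℕ) = c then (3:ℝ) else 1) ≤ 3 := by
  by_cases h : ∃ k0 : ℕ, s + (k0 + 1 : ℕ) = c
  · obtain ⟨k0, hk⟩ := h
    have : ∀ k : ℕ, (s + (k + 1 : ℕ) = c) ↔ k = k0 := fun k => by
      constructor
      · intro h
        have : ((k + 1 : ℕ) : ℝ) = (k0 + 1 : ℕ) := by linarith
        have := Nat.cast_injective this
        omega
      · rintro rfl; exact hk
    simp only [this, Finset.prod_ite_eq']
    split_ifs <;> norm_num
  · push Not at h
    simp only [h, if_false, Finset.prod_const_one]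
    norm_num

lemma phiN_bound (N : ℕ) (s : ℝ) (hs : ∃ m : ℤ, 6 * s = m) : |phiN N s| ≤ 9 / |s| := by
  obtain ⟨m, hm⟩ := hs
  have key : ∏ k ∈ Finset.range N, |1 - 1 / (9 * (s + (k + 1 : ℕ)) ^ 2)| ≤ 9 := by
    calc _ ≤ ∏ k ∈ Finset.range N, ((if s + (k + 1 : ℕ) = 1 / 6 then (3:ℝ) else 1) *
          (if s + (k + 1 : ℕ) = -(1 / 6) then (3:ℝ) else 1)) := by
          refine Finset.prod_le_prod (fun _ _ => abs_nonneg _) fun k _ => ?_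
          have hu : 6 * (s + (k + 1 : ℕ)) = ((m + 6 * (k + 1) : ℤ) : ℝ) := by push_cast; linarith
          generalize (m + 6 * (k + 1) : ℤ) = r at hu
          generalize s + ((k + 1 : ℕ) : ℝ) = u at hu
          have hu' : u = r / 6 := by linarith
          subst hu'
          rcases lt_trichotomy r 0 with h | h | h
          · rcases eq_or_lt_of_le (show r ≤ -1 by omega) with h' | h'
            · subst h'; norm_num
            · have : (r:ℝ) ≤ -2 := by exact_mod_cast (show r ≤ -2 by omega)
              have h4 : (4:ℝ) ≤ r ^ 2 := by nlinarith
              rw [if_neg (by intro h; linarith), if_neg (by intro h; linarith)]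
              have : 1 / (9 * ((r:ℝ) / 6) ^ 2) ≤ 1 := by
                rw [div_le_one (by nlinarith)]; nlinarith
              have h0 : 0 ≤ 1 / (9 * ((r:ℝ) / 6) ^ 2) := by positivity
              rw [abs_le]; constructor <;> linarith
          · subst h; norm_num
          · rcases eq_or_lt_of_le (show 1 ≤ r by omega) with h' | h'
            · subst h'; norm_num
            · have : (2:ℝ) ≤ r := by exact_mod_cast (show 2 ≤ r by omega)
              have h4 : (4:ℝ) ≤ r ^ 2 := by nlinarith
              rw [if_neg (by intro h; linarith), if_neg (by intro h; linarith)]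
              have : 1 / (9 * ((r:ℝ) / 6) ^ 2) ≤ 1 := by
                rw [div_le_one (by nlinarith)]; nlinarith
              have h0 : 0 ≤ 1 / (9 * ((r:ℝ) / 6) ^ 2) := by positivity
              rw [abs_le]; constructor <;> linarith
      _ = _ := Finset.prod_mul_distrib
      _ ≤ 3 * 3 := mul_le_mul (prod_ite_le N s _) (prod_ite_le N s _)
          (Finset.prod_nonneg fun _ _ => by split_ifs <;> norm_num) (by norm_num)
      _ = 9 := by norm_num
  unfold phiN
  rw [abs_mul, Finset.abs_prod, abs_div, abs_one, div_eq_mul_one_div 9, mul_comm]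
  exact mul_le_mul_of_nonneg_right key (by positivity)

lemma phi_bound (s : ℝ) (hs : ∃ m : ℤ, 6 * s = m) (hs' : ∀ k : ℕ, s + k ≠ 0) : |phi s| ≤ 9 / |s| :=
  le_of_tendsto (phiN_tendsto s hs').abs (Eventually.of_forall fun N => phiN_bound N s hs)

noncomputable def bd (n : ℤ) : ℝ :=
  81 * (1 / (|(n : ℝ) + 1 / 3| * |(n : ℝ) + (-(1 / 6))|)) + 81 * (1 / (|(n : ℝ) + 1 / 3| * |(n : ℝ) + 5 / 6|))

lemma bd_summable : Summable bd :=
  ((summable_prod_shift _ _).mul_left 81).add ((summable_prod_shift _ _).mul_left 81)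

def Bdd9 (φ : ℝ → ℝ) : Prop :=
  ∀ s : ℝ, (∃ m : ℤ, 6 * s = m) → (∀ k : ℕ, s + k ≠ 0) → |φ s| ≤ 9 / |s|

lemma tm_bound (φ γ : ℝ → ℝ) (h1 : Bdd9 φ) (h2 : Bdd9 γ) (n : ℤ) : ‖tm φ γ n‖ ≤ bd n := by
  have hz := nz n
  have a1 := h1 ((n : ℝ) + 1 / 3) ⟨6 * n + 2, by push_cast; ring⟩ (fun k => (hz k).1)
  have a2 := h1 (-((n : ℝ) + 1 / 3)) ⟨-(6 * n + 2), by push_cast; ring⟩ (fun k => (hz k).2.1)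
  have a3 := h2 (1 / 6 - (n : ℝ)) ⟨1 - 6 * n, by push_cast; ring⟩ (fun k => (hz k).2.2.1)
  have a4 := h2 ((n : ℝ) + 5 / 6) ⟨6 * n + 5, by push_cast; ring⟩ (fun k => (hz k).2.2.2)
  unfold tm bd
  have e1 : |(1 / 6 - (n : ℝ))| = |(n : ℝ) + (-(1 / 6))| := by rw [← abs_neg]; congr 1; ring
  rw [e1] at a3
  rw [abs_neg] at a2
  have b1 := mul_le_mul a1 a3 (abs_nonneg _) (by positivity)
  have b2 := mul_le_mul a2 a4 (abs_nonneg _) (by positivity)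
  rw [← abs_mul] at b1 b2
  have c1 : ∀ x y : ℝ, 9 / x * (9 / y) = 81 * (1 / (x * y)) := fun x y => by
    rw [div_mul_div_comm, mul_one_div]; norm_num
  rw [c1] at b1 b2
  rw [Real.norm_eq_abs]
  exact (abs_sub _ _).trans (add_le_add b1 b2)

lemma tm_tendsto (φ : ℝ → ℝ) (h1 : Bdd9 φ) :
    Tendsto (fun M => ∑' n, tm φ (phiN M) n) atTop (𝓝 (∑' n, tm φ phi n)) := by
  refine tendsto_tsum_of_dominated_convergence bd_summable ?_
    (Eventually.of_forall fun M n => tm_bound _ _ h1 (fun s hs _ => phiN_bound M s hs) n)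
  intro n
  have hz := nz n
  exact ((phiN_tendsto _ (fun k => (hz k).2.2.1)).const_mul _).sub
    ((phiN_tendsto _ (fun k => (hz k).2.2.2)).const_mul _)

lemma tm_tendsto' :
    Tendsto (fun N => ∑' n, tm (phiN N) phi n) atTop (𝓝 (∑' n, tm phi phi n)) := by
  refine tendsto_tsum_of_dominated_convergence bd_summable ?_
    (Eventually.of_forall fun M n => tm_bound _ _ (fun s hs _ => phiN_bound M s hs) phi_bound n)
  intro n
  have hz := nz n
  exact ((phiN_tendsto _ (fun k => (hz k).1)).mul_const _).sub
    ((phiN_tendsto _ (fun k => (hz k).2.1)).mul_const _)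

theorem ip_eq (F : ℝ → ℝ) (hF : ContinuousOn F (Icc 0 1))
    (hm : ∀ a : ℕ, ip F (fun y => y ^ a) = phi (a + 1 / 2)) :
    ip F F = rho * ∑' n, tm phi phi n := by
  choose f hf using exists_rep
  have hb : ∀ N M, ip (f N) (f M) = rho * ∑' n, tm (phiN N) (phiN M) n := fun N M => by
    rw [(bi (hf N) (hf M)).tsum_eq]
    have := rho_ne
    field_simp
  have hP : ∀ N, Bdd9 (phiN N) := fun N s hs _ => phiN_bound N s hs
  have hrho : 0 ≤ rho := by unfold rho; positivity
  have hC : ∀ M, ip (f M) (f M) ≤ rho * ∑' n, bd n := fun M => by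
    rw [hb]
    refine mul_le_mul_of_nonneg_left ?_ hrho
    have hs : Summable (tm (phiN M) (phiN M)) := (bi (hf M) (hf M)).summable
    exact hs.tsum_le_tsum (fun n => (le_abs_self _).trans (tm_bound _ _ (hP M) (hP M) n)) bd_summable
  have hw := weak_conv f F _ (fun M => (hf M).cont) hC hF (fun a => by
    rw [hm a]
    simp only [moment (hf _) a]
    exact phiN_tendsto _ (fun k => by positivity))
  have h1 : ∀ N, ip F (f N) = rho * ∑' n, tm (phiN N) phi n := fun N => by
    have a := hw (f N) (hf N).cont.continuousOn
    have b := (tm_tendsto (phiN N) (hP N)).const_mul rho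
    simp only [ip_comm _ (f N), hb] at a
    rw [ip_comm]
    exact tendsto_nhds_unique a b
  have h2 := hw F hF
  simp only [ip_comm _ F, h1] at h2
  exact tendsto_nhds_unique h2 (tm_tendsto'.const_mul rho)


lemma ris_zero (a : ℝ) : ris a 0 = 1 := by simp [ris]
lemma ris_succ (a : ℝ) (n : ℕ) : ris a (n + 1) = ris a n * (a + n) := by
  simp [ris, Finset.prod_range_succ]
lemma ris_succ' (a : ℝ) (n : ℕ) : ris a (n + 1) = a * ris (a + 1) n := by
  unfold ris
  rw [Finset.prod_range_succ', mul_comm]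
  congr 1
  · simp
  · refine Finset.prod_congr rfl fun k _ => ?_
    push_cast; ring
lemma ris_one (n : ℕ) : ris 1 n = n.factorial := by
  induction n with
  | zero => simp [ris]
  | succ n ih => rw [ris_succ, ih, Nat.factorial_succ]; push_cast; ring
lemma ris_pos {a : ℝ} (ha : 0 < a) (n : ℕ) : 0 < ris a n :=
  Finset.prod_pos fun k _ => by positivity

noncomputable def uu (s : ℝ) (n : ℕ) : ℝ :=
  ris (-1/3) n * ris (1/3) n / (n.factorial * ris (s + 1) n)

lemma uu_zero (s : ℝ) : uu s 0 = 1 := by simp [uu, ris]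

lemma uu_succ (s : ℝ) (hs : 0 ≤ s) (n : ℕ) :
    uu s (n + 1) = uu s n * ((n ^ 2 - 1 / 9) / ((n + 1) * (s + 1 + n))) := by
  unfold uu
  have h := ris_pos (show 0 < s + 1 by positivity) n
  have h2 : s + 1 + (n : ℝ) ≠ 0 := by positivity
  simp only [ris_succ, Nat.factorial_succ]
  push_cast
  field_simp
  ring

lemma uu_shift (s : ℝ) (hs : 0 ≤ s) (n : ℕ) : uu (s + 1) n = uu s n * ((s + 1) / (s + 1 + n)) := by
  unfold uu
  have h := ris_pos (show 0 < s + 1 by positivity) n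
  have h' := ris_pos (show 0 < s + 1 + 1 by positivity) n
  have e : (s + 1) * ris (s + 1 + 1) n = ris (s + 1) n * (s + 1 + n) := by
    rw [← ris_succ', ris_succ]
  have h2 : s + 1 + (n : ℝ) ≠ 0 := by positivity
  rw [div_mul_div_comm, div_eq_div_iff (by positivity) (by positivity)]
  linear_combination (-(ris (-1/3) n * ris (1/3) n * n.factorial)) * e

lemma uu_bound (s : ℝ) (hs : 0 ≤ s) (n : ℕ) :
    |uu s (n + 1)| ≤ 1 / (s + 1) * (1 / ((n : ℝ) + 1) ^ 2) := by
  induction n with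
  | zero =>
    rw [uu_succ s hs, uu_zero]
    have : |(1:ℝ) * ((((0:ℕ):ℝ) ^ 2 - 1 / 9) / ((((0:ℕ):ℝ) + 1) * (s + 1 + ((0:ℕ):ℝ))))| = 1 / 9 * (1 / (s + 1)) := by
      simp only [Nat.cast_zero, abs_mul, abs_div]
      rw [abs_of_nonneg (show (0:ℝ) ≤ s + 1 + 0 by positivity)]
      norm_num [abs_of_nonneg]
      ring
    rw [this]
    have : 0 ≤ 1 / (s + 1) := by positivity
    rw [Nat.cast_zero, zero_add, one_pow, div_one, mul_one]
    linarith
  | succ n ih =>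
    rw [uu_succ s hs, abs_mul]
    push_cast
    have h : |((n + 1 : ℝ) ^ 2 - 1 / 9) / ((n + 1 + 1) * (s + 1 + (n + 1)))| ≤ (n + 1 : ℝ) ^ 2 / (n + 1 + 1) ^ 2 := by
      have hn : (0:ℝ) ≤ n := Nat.cast_nonneg n
      rw [abs_of_nonneg (div_nonneg (by nlinarith) (by positivity))]
      rw [div_le_div_iff₀ (by positivity) (by positivity)]
      have : (n + 1 : ℝ) ^ 2 - 1 / 9 ≤ (n + 1 : ℝ) ^ 2 := by linarith
      refine mul_le_mul this ?_ (by positivity) (by positivity)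
      nlinarith
    calc _ ≤ (1 / (s + 1) * (1 / ((n : ℝ) + 1) ^ 2)) * ((n + 1 : ℝ) ^ 2 / (n + 1 + 1) ^ 2) :=
          mul_le_mul ih h (abs_nonneg _) (by positivity)
      _ = _ := by field_simp

lemma sq_summable : Summable (fun n : ℕ => 1 / ((n : ℝ) + 1) ^ 2) := by
  have := (summable_nat_add_iff 1).mpr (Real.summable_one_div_nat_pow.mpr (one_lt_two))
  refine this.congr fun n => by push_cast; rfl

lemma uu_summable (s : ℝ) (hs : 0 ≤ s) : Summable (fun n => |uu s n|) := by
  rw [← summable_nat_add_iff 1]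
  exact Summable.of_nonneg_of_le (fun _ => abs_nonneg _) (uu_bound s hs) (sq_summable.mul_left _)

noncomputable def Gs (s : ℝ) : ℝ := ∑' n, uu s n

lemma uu_tele (s : ℝ) (hs : 0 ≤ s) (K : ℕ) :
    ∑ n ∈ Finset.range K, ((s + 1) ^ 2 * uu s n - ((s + 1) ^ 2 - 1 / 9) * uu (s + 1) n) =
      -(s + 1) * (K * uu s K) := by
  induction K with
  | zero => simp
  | succ K ih =>
    rw [Finset.sum_range_succ, ih, uu_shift s hs, uu_succ s hs]
    have h2 : s + 1 + (K : ℝ) ≠ 0 := by positivity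
    push_cast
    field_simp
    ring

lemma Gs_rec (s : ℝ) (hs : 0 ≤ s) : Gs s = (1 - 1 / (9 * (s + 1) ^ 2)) * Gs (s + 1) := by
  have h1 := (uu_summable s hs).of_abs.hasSum
  have h2 := (uu_summable (s + 1) (by positivity)).of_abs.hasSum
  have h3 := ((h1.mul_left ((s + 1) ^ 2)).sub (h2.mul_left ((s + 1) ^ 2 - 1 / 9))).tendsto_sum_nat
  simp only [uu_tele s hs] at h3
  have h4 : Tendsto (fun K : ℕ => -(s + 1) * (K * uu s K)) atTop (𝓝 0) := by
    rw [← mul_zero (-(s + 1))]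
    refine Tendsto.const_mul _ ?_
    rw [← tendsto_add_atTop_iff_nat 1]
    refine squeeze_zero_norm (a := fun n : ℕ => 1 / (s + 1) * (1 / ((n : ℝ) + 1))) (fun n => ?_) ?_
    · rw [Real.norm_eq_abs, abs_mul, abs_of_nonneg (by positivity)]
      calc _ ≤ ((n + 1 : ℕ) : ℝ) * (1 / (s + 1) * (1 / ((n : ℝ) + 1) ^ 2)) :=
            mul_le_mul_of_nonneg_left (uu_bound s hs n) (by positivity)
        _ = _ := by push_cast; field_simp
    · rw [← mul_zero (1 / (s + 1))]
      exact tendsto_one_div_add_atTop_nhds_zero_nat.const_mul _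
  have h5 := tendsto_nhds_unique h3 h4
  have h6 : s + 1 ≠ 0 := by positivity
  unfold Gs
  field_simp
  linarith

lemma Gs_near (s : ℝ) (hs : 0 ≤ s) : |Gs s - 1| ≤ 1 / (s + 1) * ∑' n : ℕ, 1 / ((n : ℝ) + 1) ^ 2 := by
  have h := (uu_summable s hs).of_abs
  have : Gs s - 1 = ∑' n, uu s (n + 1) := by
    unfold Gs
    rw [h.tsum_eq_zero_add, uu_zero]; ring
  rw [this, ← tsum_mul_left, ← Real.norm_eq_abs]
  exact tsum_of_norm_bounded (sq_summable.mul_left _).hasSum (uu_bound s hs)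

lemma Gs_iter (s : ℝ) (hs : 0 ≤ s) (N : ℕ) :
    Gs s = (∏ k ∈ Finset.range N, (1 - 1 / (9 * (s + (k + 1 : ℕ)) ^ 2))) * Gs (s + N) := by
  induction N with
  | zero => simp
  | succ N ih =>
    rw [ih, Finset.prod_range_succ, Gs_rec (s + N) (by positivity)]
    push_cast
    simp only [add_assoc]
    ring

lemma Gs_eq (s : ℝ) (hs : 0 < s) : 1 / s * Gs s = phi s := by
  have h1 := phiN_tendsto s (fun k => by positivity)
  have h2 : Tendsto (fun N : ℕ => Gs (s + N)) atTop (𝓝 1) := by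
    rw [tendsto_iff_norm_sub_tendsto_zero]
    refine squeeze_zero (g := fun N : ℕ => 1 / ((N : ℝ) + 1) * ∑' n : ℕ, 1 / ((n : ℝ) + 1) ^ 2)
      (fun _ => norm_nonneg _) (fun N => ?_) ?_
    · refine (Gs_near (s + N) (by positivity)).trans ?_
      refine mul_le_mul_of_nonneg_right ?_ (tsum_nonneg fun n => by positivity)
      exact one_div_le_one_div_of_le (by positivity) (by linarith)
    · have := (tendsto_one_div_add_atTop_nhds_zero_nat (𝕜 := ℝ)).mul_const (∑' n : ℕ, 1 / ((n : ℝ) + 1) ^ 2)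
      rwa [zero_mul] at this
  have h3 := h1.mul h2
  rw [mul_one] at h3
  refine tendsto_nhds_unique (tendsto_const_nhds.congr fun N => ?_) h3
  rw [Gs_iter s hs.le N, phiN]; ring

noncomputable def cc (n : ℕ) : ℝ := uu 0 n

noncomputable def GG (y : ℝ) : ℝ := ∑' n, cc n * (1 - y) ^ n

lemma pFq_eq (x : ℝ) : pFq [-1/3, 1/3] [1] x = GG (1 - x) := by
  unfold pFq GG
  refine tsum_congr fun n => ?_
  simp only [cc, uu, List.map_cons, List.map_nil, List.prod_cons, List.prod_nil, mul_one, ris_one,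
    zero_add, sub_sub_cancel]
  field_simp

lemma cc_summable : Summable (fun n => |cc n|) := uu_summable 0 le_rfl

lemma one_sub_pow_le {y : ℝ} (hy : y ∈ Icc (0:ℝ) 1) (n : ℕ) : |(1 - y) ^ n| ≤ 1 := by
  rw [abs_pow]
  exact pow_le_one₀ (abs_nonneg _) (abs_le.mpr ⟨by linarith [hy.2], by linarith [hy.1]⟩)

lemma GG_cont : ContinuousOn GG (Icc 0 1) := by
  refine continuousOn_tsum (fun n => by fun_prop) cc_summable fun n y hy => ?_
  rw [Real.norm_eq_abs, abs_mul]
  exact mul_le_of_le_one_right (abs_nonneg _) (one_sub_pow_le hy n)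

lemma beta_int (n a : ℕ) : ip (fun y => (1 - y) ^ n) (fun y => y ^ a) =
    n.factorial / ris (a + 1 / 2) (n + 1) := by
  induction n generalizing a with
  | zero =>
    have := ip_pow_pow 0 a
    simp only [pow_zero] at this ⊢
    rw [this]; simp [ris]
  | succ n ih =>
    have e : ip (fun y => (1 - y) ^ (n + 1)) (fun y => y ^ a) =
        ip (fun y => (1 - y) ^ n) (fun y => y ^ a) - ip (fun y => (1 - y) ^ n) (fun y => y ^ (a + 1)) := by
      unfold ip
      rw [← mul_sub, ← intervalIntegral.integral_sub (Continuous.intervalIntegrable (by fun_prop) _ _)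
        (Continuous.intervalIntegrable (by fun_prop) _ _)]
      congr 2
      ext v; ring
    rw [e, ih, ih]
    have hs : (0:ℝ) < a + 1 / 2 := by positivity
    have e2 : (((a + 1 : ℕ) : ℝ) + 1 / 2) = (a + 1 / 2 : ℝ) + 1 := by push_cast; ring
    rw [e2]
    generalize (a + 1 / 2 : ℝ) = s at hs
    have h1 := ris_succ' s (n + 1)
    have h2 := ris_succ s (n + 1)
    have p1 := ris_pos hs (n + 1)
    have p2 := ris_pos (show 0 < s + 1 by positivity) (n + 1)
    have h3 : ris s (n + 1) = s * ris (s + 1) (n + 1) / (s + (n + 1)) := by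
      rw [eq_div_iff (by positivity)]; push_cast at h2; linarith
    rw [h1, h3, Nat.factorial_succ]
    push_cast
    field_simp
    ring

lemma GG_moment (a : ℕ) : ip GG (fun y => y ^ a) = phi (a + 1 / 2) := by
  rw [← Gs_eq _ (by positivity)]
  have h : HasSum (fun n => ∫ v in (0:ℝ)..1, cc n * ((1 - v ^ 2) ^ n * (v ^ 2) ^ a))
      (∫ v in (0:ℝ)..1, GG (v ^ 2) * (v ^ 2) ^ a) := by
    refine intervalIntegral.hasSum_integral_of_dominated_convergence (fun n _ => |cc n|) ?_ ?_ ?_ ?_ ?_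
    · intro n
      exact Continuous.aestronglyMeasurable (by fun_prop)
    · intro n
      refine Eventually.of_forall fun v hv => ?_
      rw [uIoc_of_le zero_le_one] at hv
      have hv' := sq_maps ⟨hv.1.le, hv.2⟩
      rw [Real.norm_eq_abs, abs_mul, abs_mul]
      refine mul_le_of_le_one_right (abs_nonneg _) (mul_le_one₀ (one_sub_pow_le hv' n) (abs_nonneg _) ?_)
      rw [abs_of_nonneg (pow_nonneg hv'.1 _)]
      exact pow_le_one₀ hv'.1 hv'.2
    · exact Eventually.of_forall fun v hv => cc_summable
    · simp
    · refine Eventually.of_forall fun v hv => ?_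
      rw [uIoc_of_le zero_le_one] at hv
      have hv' := sq_maps ⟨hv.1.le, hv.2⟩
      have : Summable (fun n => cc n * (1 - v ^ 2) ^ n) := by
        refine Summable.of_norm_bounded cc_summable fun n => ?_
        rw [Real.norm_eq_abs, abs_mul]
        exact mul_le_of_le_one_right (abs_nonneg _) (one_sub_pow_le hv' n)
      have := this.hasSum.mul_right ((v ^ 2) ^ a)
      simpa only [GG, mul_assoc] using this
  have h' := h.mul_left 2
  have e : ip GG (fun y => y ^ a) = 2 * ∫ v in (0:ℝ)..1, GG (v ^ 2) * (v ^ 2) ^ a := rfl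
  rw [e, ← h'.tsum_eq, Gs, ← tsum_mul_left]
  refine tsum_congr fun n => ?_
  rw [intervalIntegral.integral_const_mul]
  have hb := beta_int n a
  unfold ip at hb
  have : 2 * (cc n * ∫ v in (0:ℝ)..1, (1 - v ^ 2) ^ n * (v ^ 2) ^ a) =
    cc n * (2 * ∫ v in (0:ℝ)..1, (1 - v ^ 2) ^ n * (v ^ 2) ^ a) := by ring
  rw [this, hb, ris_succ']
  have hp := ris_pos (show (0:ℝ) < a + 1 / 2 + 1 by positivity) n
  simp only [cc, uu, zero_add, ris_one]
  have : (a + 1 / 2 : ℝ) ≠ 0 := by positivity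
  field_simp

theorem ip_GG : ip GG GG = rho * ∑' n, tm phi phi n := ip_eq GG GG_cont GG_moment


lemma int_eq_ip : (∫ x in (0:ℝ)..1, (pFq [-1/3, 1/3] [1] x)^2 / Real.sqrt (1 - x)) = ip GG GG := by
  simp only [pFq_eq]
  have h := intervalIntegral.integral_comp_sub_left (a := 0) (b := 1)
    (fun y : ℝ => GG y ^ 2 / Real.sqrt y) 1
  simp only [sub_self, sub_zero] at h
  rw [h, ip, intervalIntegral.integral_of_le zero_le_one, intervalIntegral.integral_of_le zero_le_one]
  have himg : (fun v : ℝ => v ^ 2) '' Ioc 0 1 = Ioc 0 1 := by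
    ext y
    constructor
    · rintro ⟨v, hv, rfl⟩
      exact ⟨by have := hv.1; positivity, pow_le_one₀ hv.1.le hv.2⟩
    · intro hy
      exact ⟨Real.sqrt y, ⟨Real.sqrt_pos.mpr hy.1, Real.sqrt_le_one.mpr hy.2⟩, Real.sq_sqrt hy.1.le⟩
  have hinj : InjOn (fun v : ℝ => v ^ 2) (Ioc 0 1) := fun a ha b hb hab =>
    (pow_left_inj₀ ha.1.le hb.1.le two_ne_zero).mp hab
  have h2 := integral_image_eq_integral_abs_deriv_smul (s := Ioc (0:ℝ) 1) (f := fun v : ℝ => v ^ 2)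
    (f' := fun v => 2 * v) measurableSet_Ioc
    (fun v _ => by simpa using (hasDerivAt_pow 2 v).hasDerivWithinAt) hinj
    (fun y : ℝ => GG y ^ 2 / Real.sqrt y)
  rw [himg] at h2
  rw [h2, ← integral_const_mul]
  refine setIntegral_congr_fun measurableSet_Ioc fun v hv => ?_
  have hv0 := hv.1
  simp only [smul_eq_mul]
  rw [Real.sqrt_sq hv0.le, abs_of_pos (by positivity)]
  field_simp

lemma phi_rec (s : ℝ) (h0 : s ≠ 0) (h1 : s + 1 ≠ 0) (h2 : s + 4 / 3 ≠ 0) (h3 : s + 2 / 3 ≠ 0) :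
    phi (s + 1) = phi s * (s * (s + 1) / ((s + 4 / 3) * (s + 2 / 3))) := by
  unfold phi
  have e1 := Real.Gamma_add_one h1
  have e2 := Real.Gamma_add_one h2
  have e3 := Real.Gamma_add_one h3
  rw [show s + 1 + 4 / 3 = s + 4 / 3 + 1 by ring, show s + 1 + 2 / 3 = s + 2 / 3 + 1 by ring, e1, e2, e3]
  generalize Real.Gamma (s + 4 / 3) = x
  generalize Real.Gamma (s + 2 / 3) = y
  generalize Real.Gamma (s + 1) = z
  by_cases hx : x = 0
  · simp [hx]
  by_cases hy : y = 0
  · simp [hy]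
  field_simp

noncomputable def tA (n : ℤ) : ℝ := phi ((n : ℝ) + 1 / 3) * phi (1 / 6 - n)
noncomputable def tB (n : ℤ) : ℝ := phi (-((n : ℝ) + 1 / 3)) * phi (n + 5 / 6)

lemma tA_summable : Summable tA := by
  refine Summable.of_norm_bounded
    ((summable_prod_shift (1 / 3) (-(1 / 6))).mul_left 81) fun n => ?_
  have hz := nz n
  have a1 := phi_bound ((n : ℝ) + 1 / 3) ⟨6 * n + 2, by push_cast; ring⟩ (fun k => (hz k).1)
  have a3 := phi_bound (1 / 6 - (n : ℝ)) ⟨1 - 6 * n, by push_cast; ring⟩ (fun k => (hz k).2.2.1)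
  have e1 : |(1 / 6 - (n : ℝ))| = |(n : ℝ) + (-(1 / 6))| := by rw [← abs_neg]; congr 1; ring
  rw [e1] at a3
  have b1 := mul_le_mul a1 a3 (abs_nonneg _) (by positivity)
  rw [← abs_mul, div_mul_div_comm, show (9:ℝ) * 9 = 81 by norm_num] at b1
  rw [Real.norm_eq_abs, mul_one_div]
  exact b1

lemma tB_summable : Summable tB := by
  refine Summable.of_norm_bounded
    ((summable_prod_shift (1 / 3) (5 / 6)).mul_left 81) fun n => ?_
  have hz := nz n
  have a2 := phi_bound (-((n : ℝ) + 1 / 3)) ⟨-(6 * n + 2), by push_cast; ring⟩ (fun k => (hz k).2.1)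
  have a4 := phi_bound ((n : ℝ) + 5 / 6) ⟨6 * n + 5, by push_cast; ring⟩ (fun k => (hz k).2.2.2)
  rw [abs_neg] at a2
  have b1 := mul_le_mul a2 a4 (abs_nonneg _) (by positivity)
  rw [← abs_mul, div_mul_div_comm, show (9:ℝ) * 9 = 81 by norm_num] at b1
  rw [Real.norm_eq_abs, mul_one_div]
  exact b1

lemma tm_split : ∑' n, tm phi phi n = ∑' n, tA n - ∑' n, tB n :=
  tA_summable.tsum_sub tB_summable

lemma tA_nat : ∑' n, tA n = ∑' m : ℕ, tA m := by
  refine (Function.Injective.tsum_eq (g := fun m : ℕ => (m : ℤ)) Nat.cast_injective ?_).symm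
  intro n hn
  by_contra h
  apply hn
  have hneg : n < 0 := by
    by_contra h'
    exact h ⟨n.toNat, Int.toNat_of_nonneg (by omega)⟩
  have : Real.Gamma ((n : ℝ) + 1 / 3 + 2 / 3) = 0 := by
    rw [Real.Gamma_eq_zero_iff]
    refine ⟨(-(n + 1)).toNat, ?_⟩
    have : (((-(n + 1)).toNat : ℤ) : ℝ) = ((-(n + 1) : ℤ) : ℝ) := by
      rw [Int.toNat_of_nonneg (by omega)]
    push_cast at this
    rw [this]; ring
  simp only [tA, phi, this, mul_zero, div_zero, zero_mul]

lemma tB_nat : ∑' n, tB n = ∑' m : ℕ, tB (-m) := by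
  refine (Function.Injective.tsum_eq (g := fun m : ℕ => (-m : ℤ))
    (fun a b hab => by simpa using hab) ?_).symm
  intro n hn
  by_contra h
  apply hn
  have hneg : 0 < n := by
    by_contra h'
    exact h ⟨(-n).toNat, by show -(((-n).toNat : ℕ) : ℤ) = n; rw [Int.toNat_of_nonneg (by omega)]; omega⟩
  have : Real.Gamma (-((n : ℝ) + 1 / 3) + 4 / 3) = 0 := by
    rw [Real.Gamma_eq_zero_iff]
    refine ⟨(n - 1).toNat, ?_⟩
    have : (((n - 1).toNat : ℤ) : ℝ) = ((n - 1 : ℤ) : ℝ) := by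
      rw [Int.toNat_of_nonneg (by omega)]
    push_cast at this
    rw [this]; ring
  simp only [tB, phi, this, mul_zero, div_zero, zero_mul]

lemma nat_sub_ne (m : ℕ) (a b : ℤ) (hb : b = 6) (ha : ¬ (6:ℤ) ∣ a) : (m : ℝ) + a / b ≠ 0 := by
  subst hb
  intro h
  have : (6 * (m : ℤ) + a : ℤ) = 0 := by
    have : (6 * (m : ℝ) + a) = 0 := by
      push_cast at h; linarith
    exact_mod_cast this
  apply ha
  omega

lemma ris_ne {a : ℝ} (h : ∀ k : ℕ, a + k ≠ 0) (n : ℕ) : ris a n ≠ 0 :=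
  Finset.prod_ne_zero_iff.mpr fun k _ => h k

lemma six_ne (a : ℤ) (ha : ¬ (6:ℤ) ∣ a) (k : ℕ) : (a : ℝ) / 6 + k ≠ 0 := by
  have := nat_sub_ne k a 6 rfl ha
  rw [add_comm]; exact_mod_cast this

lemma tA_term (m : ℕ) : tA m = phi (1 / 3) * phi (1 / 6) *
    (ris (-1/2) m * (ris (1/6) m * (ris (1/3) m * ris (4/3) m)) /
      (ris (-1/6) m * (ris (5/6) m * ris (5/3) m)) / m.factorial) := by
  induction m with
  | zero => simp [tA, ris]
  | succ m ih =>
    have q1 : -1 / 6 + (m : ℝ) ≠ 0 := by have := six_ne (-1) (by decide) m; push_cast at this; exact this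
    have q2 : 5 / 6 + (m : ℝ) ≠ 0 := by positivity
    have q3 : 5 / 3 + (m : ℝ) ≠ 0 := by positivity
    have q4 : (m : ℝ) - 1 / 2 ≠ 0 := by
      have := six_ne (-3) (by decide) m; push_cast at this; intro h; apply this; linarith
    have q5 : (m : ℝ) + 1 / 6 ≠ 0 := by positivity
    have r1 : ris (-1/6) m ≠ 0 := ris_ne (fun k => by
      have := six_ne (-1) (by decide) k; push_cast at this; exact this) m
    have r2 := (ris_pos (show (0:ℝ) < 5/6 by norm_num) m).ne'
    have r3 := (ris_pos (show (0:ℝ) < 5/3 by norm_num) m).ne'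
    have e1 := phi_rec ((m : ℝ) + 1 / 3) (by positivity) (by positivity) (by positivity) (by positivity)
    have e2 := phi_rec (-(m : ℝ) - 5 / 6) (by intro h; apply q2; linarith) (by intro h; apply q1; linarith)
      (by intro h; apply q4; linarith) (by intro h; apply q5; linarith)
    have e3 : tA ((m + 1 : ℕ) : ℤ) = phi ((m : ℝ) + 1 / 3 + 1) * phi (-(m : ℝ) - 5 / 6) := by
      simp only [tA]; push_cast; congr 2 <;> ring
    have e4 : tA (m : ℤ) = phi ((m : ℝ) + 1 / 3) * phi (-(m : ℝ) - 5 / 6 + 1) := by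
      simp only [tA]; push_cast; congr 2; ring
    have e5 : tA ((m + 1 : ℕ) : ℤ) = tA (m : ℤ) * (((m : ℝ) + 1 / 3) * (m + 4 / 3) * ((m - 1 / 2) * (m + 1 / 6)) /
        (((m : ℝ) + 5 / 3) * (m + 1) * ((5 / 6 + m) * (-1 / 6 + m)))) := by
      rw [e3, e4, e1, e2]
      have w1 : -(m : ℝ) - 5 / 6 + 4 / 3 = -(m - 1 / 2) := by ring
      have w2 : -(m : ℝ) - 5 / 6 + 2 / 3 = -(m + 1 / 6) := by ring
      have w3 : -(m : ℝ) - 5 / 6 + 1 = -(-1 / 6 + m) := by ring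
      have w4 : -(m : ℝ) - 5 / 6 = -(5 / 6 + m) := by ring
      have w5 : (m : ℝ) + 1 / 3 + 4 / 3 = m + 5 / 3 := by ring
      have w6 : (m : ℝ) + 1 / 3 + 2 / 3 = m + 1 := by ring
      have w7 : (m : ℝ) + 1 / 3 + 1 = m + 4 / 3 := by ring
      rw [w1, w2, w3, w5, w6, w7, w4]
      generalize phi (m + 1 / 3) = X
      generalize phi (-(5 / 6 + (m : ℝ))) = Y
      generalize hA : (m : ℝ) - 1 / 2 = A at *
      generalize hB : (m : ℝ) + 1 / 6 = B at *
      generalize hC : -1 / 6 + (m : ℝ) = C at *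
      generalize hD : 5 / 6 + (m : ℝ) = D at *
      field_simp
    rw [e5, ih]
    simp only [ris_succ, Nat.factorial_succ]
    push_cast
    rw [show (m : ℝ) + 5 / 3 = 5 / 3 + m by ring, show (m : ℝ) - 1 / 2 = -1 / 2 + m by ring,
      show (m : ℝ) + 1 / 6 = 1 / 6 + m by ring, show (m : ℝ) + 1 / 3 = 1 / 3 + m by ring,
      show (m : ℝ) + 4 / 3 = 4 / 3 + m by ring]
    generalize -1 / 6 + (m : ℝ) = C at *
    generalize 5 / 6 + (m : ℝ) = D at *
    generalize 5 / 3 + (m : ℝ) = E at *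
    field_simp

lemma tB_term (m : ℕ) : tB (-m) = phi (-(1 / 3)) * phi (5 / 6) *
    (ris (-7/6) m * (ris (-1/2) m * (ris (-1/3) m * ris (2/3) m)) /
      (ris (-5/6) m * (ris (1/6) m * ris (1/3) m)) / m.factorial) := by
  induction m with
  | zero => simp [tB, ris]
  | succ m ih =>
    have q1 : -5 / 6 + (m : ℝ) ≠ 0 := by have := six_ne (-5) (by decide) m; push_cast at this; exact this
    have q2 : 1 / 6 + (m : ℝ) ≠ 0 := by positivity
    have q3 : 1 / 3 + (m : ℝ) ≠ 0 := by positivity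
    have q4 : -1 / 2 + (m : ℝ) ≠ 0 := by
      have := six_ne (-3) (by decide) m; push_cast at this; intro h; apply this; linarith
    have q5 : -7 / 6 + (m : ℝ) ≠ 0 := by
      have := six_ne (-7) (by decide) m; push_cast at this; intro h; apply this; linarith
    have q6 : -1 / 3 + (m : ℝ) ≠ 0 := by
      have := six_ne (-2) (by decide) m; push_cast at this; intro h; apply this; linarith
    have q7 : 2 / 3 + (m : ℝ) ≠ 0 := by positivity
    have q8 : (m : ℝ) + 1 ≠ 0 := by positivity
    have r1 : ris (-5/6) m ≠ 0 := ris_ne (fun k => by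
      have := six_ne (-5) (by decide) k; push_cast at this; exact this) m
    have r2 := (ris_pos (show (0:ℝ) < 1/6 by norm_num) m).ne'
    have r3 := (ris_pos (show (0:ℝ) < 1/3 by norm_num) m).ne'
    have w1 : -(m : ℝ) - 1 / 6 + 4 / 3 = -(-7 / 6 + m) := by ring
    have w2 : -(m : ℝ) - 1 / 6 + 2 / 3 = -(-1 / 2 + m) := by ring
    have w3 : -(m : ℝ) - 1 / 6 + 1 = -(-5 / 6 + m) := by ring
    have w4 : -(m : ℝ) - 1 / 6 = -(1 / 6 + m) := by ring
    have w5 : -1 / 3 + (m : ℝ) + 4 / 3 = m + 1 := by ring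
    have w6 : -1 / 3 + (m : ℝ) + 2 / 3 = 1 / 3 + m := by ring
    have w7 : -1 / 3 + (m : ℝ) + 1 = 2 / 3 + m := by ring
    have e1 := phi_rec (-1 / 3 + (m : ℝ)) q6 (by rw [w7]; exact q7) (by rw [w5]; exact q8) (by rw [w6]; exact q3)
    have e2 := phi_rec (-(m : ℝ) - 1 / 6) (by rw [w4]; exact neg_ne_zero.mpr q2)
      (by rw [w3]; exact neg_ne_zero.mpr q1)
      (by rw [w1]; exact neg_ne_zero.mpr q5) (by rw [w2]; exact neg_ne_zero.mpr q4)
    have e3 : tB (-((m + 1 : ℕ) : ℤ)) = phi (-1 / 3 + (m : ℝ) + 1) * phi (-(m : ℝ) - 1 / 6) := by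
      simp only [tB]; push_cast; congr 2 <;> ring
    have e4 : tB (-(m : ℤ)) = phi (-1 / 3 + (m : ℝ)) * phi (-(m : ℝ) - 1 / 6 + 1) := by
      simp only [tB]; push_cast; congr 2 <;> ring
    have e5 : tB (-((m + 1 : ℕ) : ℤ)) = tB (-(m : ℤ)) * ((-1 / 3 + (m : ℝ)) * (2 / 3 + m) *
        ((-7 / 6 + m) * (-1 / 2 + m)) /
        (((m : ℝ) + 1) * (1 / 3 + m) * ((1 / 6 + m) * (-5 / 6 + m)))) := by
      rw [e3, e4, e1, e2]
      rw [w1, w2, w3, w5, w6, w7, w4]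
      generalize phi (-1 / 3 + (m : ℝ)) = X
      generalize phi (-(1 / 6 + (m : ℝ))) = Y
      generalize -7 / 6 + (m : ℝ) = A at *
      generalize -1 / 2 + (m : ℝ) = B at *
      generalize -5 / 6 + (m : ℝ) = C at *
      generalize 1 / 6 + (m : ℝ) = D at *
      generalize 1 / 3 + (m : ℝ) = E at *
      generalize (m : ℝ) + 1 = G at *
      field_simp
    rw [e5, ih]
    simp only [ris_succ, Nat.factorial_succ]
    push_cast
    generalize -5 / 6 + (m : ℝ) = C at *
    generalize 1 / 6 + (m : ℝ) = D at *
    generalize 1 / 3 + (m : ℝ) = E at *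
    generalize ris (-5/6) m = R1 at *
    generalize ris (1/6) m = R2 at *
    generalize ris (1/3) m = R3 at *
    have hf : (m.factorial : ℝ) ≠ 0 := by positivity
    generalize (m.factorial : ℝ) = R4 at *
    generalize (m : ℝ) + 1 = G at *
    clear e1 e2 e3 e4 e5 ih w1 w2 w3 w4 w5 w6 w7
    rw [div_div, div_div, mul_assoc, div_mul_div_comm]
    congr 1
    congr 1 <;> ring

lemma tA_pFq : ∑' n, tA n = phi (1 / 3) * phi (1 / 6) * pFq [-1/2, 1/6, 1/3, 4/3] [-1/6, 5/6, 5/3] 1 := by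
  rw [tA_nat, pFq, ← tsum_mul_left]
  refine tsum_congr fun m => ?_
  rw [tA_term]
  simp

lemma tB_pFq : ∑' n, tB n = phi (-(1 / 3)) * phi (5 / 6) * pFq [-7/6, -1/2, -1/3, 2/3] [-5/6, 1/6, 1/3] 1 := by
  rw [tB_nat, pFq, ← tsum_mul_left]
  refine tsum_congr fun m => ?_
  rw [tB_term]
  simp

lemma gam_two_thirds : Real.Gamma (2 / 3) = 2 * √π ^ 2 / (√3 * Real.Gamma (1 / 3)) := by
  have h := Real.Gamma_mul_Gamma_one_sub (1 / 3)
  have hg : Real.Gamma (1 / 3) ≠ 0 := (Real.Gamma_pos_of_pos (by norm_num)).ne'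
  rw [show (1:ℝ) - 1 / 3 = 2 / 3 by norm_num, show π * (1 / 3) = π / 3 by ring, Real.sin_pi_div_three] at h
  rw [Real.sq_sqrt pi_pos.le]
  field_simp at h ⊢
  linarith

lemma gam_five_sixths : Real.Gamma (5 / 6) = 2 * √π ^ 2 / Real.Gamma (1 / 6) := by
  have h := Real.Gamma_mul_Gamma_one_sub (1 / 6)
  have hg : Real.Gamma (1 / 6) ≠ 0 := (Real.Gamma_pos_of_pos (by norm_num)).ne'
  rw [show (1:ℝ) - 1 / 6 = 5 / 6 by norm_num, show π * (1 / 6) = π / 6 by ring, Real.sin_pi_div_six] at h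
  rw [Real.sq_sqrt pi_pos.le]
  field_simp at h ⊢
  linarith

lemma gam_sixth : Real.Gamma (1 / 6) ^ 3 = 3 * √3 * Real.Gamma (1 / 3) ^ 6 / (2 * √π ^ 3) := by
  have h := Real.Gamma_mul_Gamma_add_half (1 / 6)
  rw [show (1:ℝ) / 6 + 1 / 2 = 2 / 3 by norm_num, show 2 * ((1:ℝ) / 6) = 1 / 3 by norm_num,
    gam_two_thirds] at h
  have hg : 0 < Real.Gamma (1 / 3) := (Real.Gamma_pos_of_pos (by norm_num))
  have hc : ((2:ℝ) ^ (1 - 1 / 3 : ℝ)) ^ 3 = 4 := by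
    rw [← Real.rpow_natCast, ← Real.rpow_mul (by norm_num)]; norm_num
  have hp : 0 < √π := Real.sqrt_pos.mpr pi_pos
  have ht : √3 ^ 2 = 3 := Real.sq_sqrt (by norm_num)
  have ht0 : 0 < √3 := Real.sqrt_pos.mpr (by norm_num)
  generalize Real.Gamma (1 / 6) = h6 at *
  generalize Real.Gamma (1 / 3) = g at *
  generalize √π = p at *
  generalize √3 = t at *
  generalize (2:ℝ) ^ (1 - 1 / 3 : ℝ) = c at *
  have h1 : h6 = g ^ 2 * c * t / (2 * p) := by
    field_simp at h ⊢; linarith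
  rw [h1, div_pow, mul_pow, mul_pow, hc]
  have : t ^ 3 = 3 * t := by rw [pow_succ, ht]
  rw [this]
  field_simp
  ring

lemma const1 : rho * (phi (1 / 3) * phi (1 / 6)) = 3 / √π * (√3 / 128 * (Real.Gamma (1 / 3) / √π) ^ 9) := by
  have g1 : Real.Gamma (1 / 3 + 1) = 1 / 3 * Real.Gamma (1 / 3) := Real.Gamma_add_one (by norm_num)
  have g2 : Real.Gamma (1 / 3 + 4 / 3) = 2 / 3 * Real.Gamma (2 / 3) := by
    rw [← Real.Gamma_add_one (by norm_num)]; norm_num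
  have g3 : Real.Gamma (1 / 3 + 2 / 3) = 1 := by norm_num
  have g4 : Real.Gamma (1 / 6 + 1) = 1 / 6 * Real.Gamma (1 / 6) := Real.Gamma_add_one (by norm_num)
  have g5 : Real.Gamma (1 / 6 + 4 / 3) = 1 / 2 * √π := by
    rw [← Real.Gamma_one_half_eq, ← Real.Gamma_add_one (by norm_num)]; norm_num
  have g6 : (1:ℝ) / 6 + 2 / 3 = 5 / 6 := by norm_num
  unfold phi rho
  rw [g1, g2, g3, g4, g5, g6, gam_two_thirds, gam_five_sixths]
  have h := gam_sixth
  have hg : 0 < Real.Gamma (1 / 3) := (Real.Gamma_pos_of_pos (by norm_num))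
  have hg6 : 0 < Real.Gamma (1 / 6) := (Real.Gamma_pos_of_pos (by norm_num))
  have hp : 0 < √π := Real.sqrt_pos.mpr pi_pos
  have hpi : √π ^ 2 = π := Real.sq_sqrt pi_pos.le
  have ht : √3 ^ 2 = 3 := Real.sq_sqrt (by norm_num)
  have ht0 : 0 < √3 := Real.sqrt_pos.mpr (by norm_num)
  have hpi' := hpi.symm
  generalize π = P at *
  generalize √P = p at *
  subst hpi'
  generalize Real.Gamma (1 / 6) = h6 at *
  generalize Real.Gamma (1 / 3) = g at *
  generalize √3 = t at *
  have : t / (8 * p ^ 2) * (1 / (1 / 3) * ((1 / 3 * g) ^ 2 / (2 / 3 * (2 * p ^ 2 / (t * g)) * 1)) *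
    (1 / (1 / 6) * ((1 / 6 * h6) ^ 2 / (1 / 2 * p * (2 * p ^ 2 / h6))))) =
    t ^ 2 * g ^ 3 * h6 ^ 3 / (192 * p ^ 7) := by
    field_simp
    norm_num
  rw [this, h, ht]
  field_simp
  norm_num

lemma const2 : rho * (phi (-(1 / 3)) * phi (5 / 6)) = -(3 / √π * (80 / 21 * (√π / Real.Gamma (1 / 3)) ^ 9)) := by
  have g1 : (-(1 / 3) + 1 : ℝ) = 2 / 3 := by norm_num
  have g2 : Real.Gamma (-(1 / 3) + 4 / 3) = 1 := by norm_num
  have g3 : (-(1 / 3) + 2 / 3 : ℝ) = 1 / 3 := by norm_num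
  have g4 : Real.Gamma (5 / 6 + 1) = 5 / 6 * Real.Gamma (5 / 6) := Real.Gamma_add_one (by norm_num)
  have g5 : Real.Gamma (5 / 6 + 2 / 3) = 1 / 2 * √π := by
    rw [← Real.Gamma_one_half_eq, ← Real.Gamma_add_one (by norm_num)]; norm_num
  have g6 : Real.Gamma (5 / 6 + 4 / 3) = 7 / 6 * (1 / 6 * Real.Gamma (1 / 6)) := by
    rw [← Real.Gamma_add_one (by norm_num), show (7:ℝ) / 6 = 1 / 6 + 1 by norm_num,
      ← Real.Gamma_add_one (by norm_num)]; norm_num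
  unfold phi rho
  rw [g1, g2, g3, g4, g5, g6, gam_two_thirds, gam_five_sixths]
  have h := gam_sixth
  have hg : 0 < Real.Gamma (1 / 3) := (Real.Gamma_pos_of_pos (by norm_num))
  have hg6 : 0 < Real.Gamma (1 / 6) := (Real.Gamma_pos_of_pos (by norm_num))
  have hp : 0 < √π := Real.sqrt_pos.mpr pi_pos
  have hpi : √π ^ 2 = π := Real.sq_sqrt pi_pos.le
  have ht : √3 ^ 2 = 3 := Real.sq_sqrt (by norm_num)
  have ht0 : 0 < √3 := Real.sqrt_pos.mpr (by norm_num)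
  have hpi' := hpi.symm
  generalize π = P at *
  generalize √P = p at *
  subst hpi'
  generalize Real.Gamma (1 / 6) = h6 at *
  generalize Real.Gamma (1 / 3) = g at *
  generalize √3 = t at *
  have : t / (8 * p ^ 2) * (1 / -(1 / 3) * ((2 * p ^ 2 / (t * g)) ^ 2 / (1 * g)) *
    (1 / (5 / 6) * ((5 / 6 * (2 * p ^ 2 / h6)) ^ 2 / (7 / 6 * (1 / 6 * h6) * (1 / 2 * p))))) =
    -(360 / 7 * p ^ 5 / (t * g ^ 3 * h6 ^ 3)) := by
    field_simp
    norm_num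
  rw [this, h]
  have t2 : t * g ^ 3 * (3 * t * g ^ 6 / (2 * p ^ 3)) = 9 * g ^ 9 / (2 * p ^ 3) := by
    field_simp
    rw [ht]; norm_num
  rw [t2]
  field_simp
  norm_num

theorem broadhurst_laporta_integral_4F3 :
    (∫ x in (0:ℝ)..1, (pFq [-1/3, 1/3] [1] x)^2 / Real.sqrt (1 - x))
    = (3 / Real.sqrt π) *
        ((Real.sqrt 3 / 128) * (Gamma (1/3) / Real.sqrt π)^9 *
            pFq [-1/2, 1/6, 1/3, 4/3] [-1/6, 5/6, 5/3] 1
          + (80/21) * (Real.sqrt π / Gamma (1/3))^9 *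
            pFq [-7/6, -1/2, -1/3, 2/3] [-5/6, 1/6, 1/3] 1) := by
  rw [int_eq_ip, ip_GG, tm_split, tA_pFq, tB_pFq, mul_sub, ← mul_assoc, ← mul_assoc rho (phi (-(1 / 3)) * _),
    const1, const2]
  ring
end

section
/- ∫₀¹ ₂F₁(1/3,2/3;1|x)·₂F₁(1/3,2/3;1|1−x)·(1−x)^{−1/2} dx = 3·₄F₃(1/3,1/2,1/2,2/3; 5/6,1,7/6 | 1). -/
open Real MeasureTheory Set

open Filter Topology

lemma ris_mono {a b : ℝ} (ha : 0 < a) (hab : a ≤ b) (n : ℕ) : ris a n ≤ ris b n :=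
  Finset.prod_le_prod (fun k _ => by positivity) fun k _ => by linarith

noncomputable def tt (c : ℝ) (k : ℕ) : ℝ :=
  ris (1/3) k * ris (2/3) k / (ris c k * k.factorial)

lemma tt_pos {c : ℝ} (hc : 0 < c) (k : ℕ) : 0 < tt c k := by
  have h1 := ris_pos (a := 1/3) (by norm_num) k
  have h2 := ris_pos (a := 2/3) (by norm_num) k
  have h3 := ris_pos hc k
  unfold tt; positivity

lemma tt_zero (c : ℝ) : tt c 0 = 1 := by simp [tt, ris]

lemma tt_succ {c : ℝ} (hc : 0 < c) (k : ℕ) :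
    tt c (k + 1) = tt c k * ((1/3 + k) * (2/3 + k) / ((c + k) * (k + 1))) := by
  have h3 := (ris_pos hc k).ne'
  have h4 : c + k ≠ 0 := by positivity
  unfold tt
  rw [ris_succ, ris_succ, ris_succ, Nat.factorial_succ]
  push_cast
  field_simp

lemma tt_add_one {c : ℝ} (hc : 0 < c) (k : ℕ) : tt (c + 1) k = tt c k * (c / (c + k)) := by
  have h3 := (ris_pos hc k).ne'
  have h5 := (ris_pos (a := c + 1) (by positivity) k).ne'
  have h4 : c + k ≠ 0 := by positivity
  have h6 : ris c k * (c + k) = c * ris (c + 1) k := by rw [← ris_succ, ris_succ']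
  unfold tt
  field_simp
  linear_combination (ris (1/3) k * ris (2/3) k) * h6

lemma tt_anti {c d : ℝ} (hc : 0 < c) (hcd : c ≤ d) (k : ℕ) : tt d k ≤ tt c k := by
  have h1 := ris_pos (a := 1/3) (by norm_num) k
  have h2 := ris_pos (a := 2/3) (by norm_num) k
  have h3 := ris_pos hc k
  have h4 := ris_mono hc hcd k
  unfold tt
  gcongr

lemma tt_one_le (k : ℕ) : tt 1 k ≤ 1 / (k + 1) := by
  induction k with
  | zero => simp [tt_zero]
  | succ k ih =>
    rw [tt_succ (by norm_num)]
    calc _ ≤ (1 / ((k:ℝ) + 1)) * ((1/3 + k) * (2/3 + k) / ((1 + k) * (k + 1))) := by gcongr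
      _ ≤ _ := by
        push_cast
        rw [div_mul_div_comm, div_le_div_iff₀ (by positivity) (by positivity)]
        have : (0:ℝ) ≤ k := by positivity
        nlinarith

lemma tt_sq_le (k : ℕ) : (tt (3/2) k) ^ 2 ≤ 1 / ((k:ℝ) + 1) ^ 3 := by
  induction k with
  | zero => simp [tt_zero]
  | succ k ih =>
    rw [tt_succ (by norm_num), mul_pow]
    calc _ ≤ (1 / ((k:ℝ) + 1) ^ 3) * ((1/3 + k) * (2/3 + k) / ((3/2 + k) * (k + 1))) ^ 2 := by
            gcongr
      _ ≤ _ := by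
        push_cast
        rw [div_pow, div_mul_div_comm, div_le_div_iff₀ (by positivity) (by positivity)]
        have : (0:ℝ) ≤ k := by positivity
        rw [← sub_nonneg]
        ring_nf
        positivity

lemma tt_le (k : ℕ) : tt (3/2) k ≤ 1 / ((k:ℝ) + 1) ^ (3/2 : ℝ) := by
  have h : (1 / ((k:ℝ) + 1) ^ (3/2 : ℝ)) ^ 2 = 1 / ((k:ℝ) + 1) ^ 3 := by
    rw [div_pow, one_pow, ← rpow_natCast (_ ^ _) 2, ← rpow_mul (by positivity), ← rpow_natCast _ 3]
    norm_num
  refine le_of_sq_le_sq ?_ (by positivity)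
  rw [h]; exact tt_sq_le k

lemma summ_base : Summable (tt (3/2)) := by
  have h : Summable fun k : ℕ => 1 / ((k:ℝ)) ^ (3/2 : ℝ) :=
    Real.summable_one_div_nat_rpow.mpr (by norm_num)
  have h' := (summable_nat_add_iff 1).mpr h
  refine Summable.of_nonneg_of_le (fun k => (tt_pos (by norm_num) k).le) (fun k => ?_) h'
  simpa using tt_le k

lemma summ_tt {c : ℝ} (hc : 3/2 ≤ c) : Summable (tt c) :=
  Summable.of_nonneg_of_le (fun k => (tt_pos (by linarith) k).le)
    (fun k => tt_anti (by norm_num) hc k) summ_base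

lemma lim_base : Tendsto (fun k : ℕ => (k:ℝ) * tt (3/2) k) atTop (𝓝 0) := by
  have h1 : Tendsto (fun k : ℕ => √(1 / ((k:ℝ) + 1))) atTop (𝓝 0) := by
    have := (tendsto_one_div_add_atTop_nhds_zero_nat (𝕜 := ℝ)).sqrt
    simpa using this
  refine squeeze_zero (fun k => mul_nonneg (by positivity) (tt_pos (by norm_num) k).le) (fun k => ?_) h1
  apply Real.le_sqrt_of_sq_le
  rw [mul_pow]
  calc (k:ℝ)^2 * _ ≤ ((k:ℝ)+1)^2 * (1 / ((k:ℝ) + 1) ^ 3) := by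
        gcongr
        · linarith
        · exact tt_sq_le k
    _ = _ := by field_simp

lemma lim_tt {c : ℝ} (hc : 3/2 ≤ c) : Tendsto (fun k : ℕ => (k:ℝ) * tt c k) atTop (𝓝 0) :=
  squeeze_zero (fun k => mul_nonneg (by positivity) (tt_pos (by linarith) k).le)
    (fun k => mul_le_mul_of_nonneg_left (tt_anti (by norm_num) hc k) (by positivity)) lim_base

noncomputable def SS (c : ℝ) : ℝ := ∑' k, tt c k

lemma gauss_fin {c : ℝ} (hc : 0 < c) (N : ℕ) :
    c * (c - 1) * ∑ k ∈ Finset.range N, tt c k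
      = (c - 1/3) * (c - 2/3) * ∑ k ∈ Finset.range N, tt (c + 1) k - c * (N * tt c N) := by
  induction N with
  | zero => simp
  | succ N ih =>
    rw [Finset.sum_range_succ, Finset.sum_range_succ, mul_add, ih, tt_succ hc, tt_add_one hc]
    have h4 : c + N ≠ 0 := by positivity
    push_cast
    field_simp
    ring

lemma gauss_rec {c : ℝ} (hc : 3/2 ≤ c) :
    c * (c - 1) * SS c = (c - 1/3) * (c - 2/3) * SS (c + 1) := by
  have h1 := (summ_tt hc).hasSum.tendsto_sum_nat
  have h2 := (summ_tt (c := c + 1) (by linarith)).hasSum.tendsto_sum_nat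
  have h3 := (h2.const_mul ((c - 1/3) * (c - 2/3))).sub ((lim_tt hc).const_mul c)
  have h4 := h1.const_mul (c * (c - 1))
  simp only [gauss_fin (show 0 < c by linarith)] at h4
  have := tendsto_nhds_unique h4 h3
  simpa [SS] using this

lemma SS_lim : Tendsto (fun n : ℕ => SS (n + 3/2)) atTop (𝓝 1) := by
  have hb : ∀ n : ℕ, SS (n + 3/2) ≤ 1 + (3/2 * SS (3/2)) * (1 / ((n:ℝ) + 1)) := by
    intro n
    have hs := summ_tt (c := n + 3/2) (by simp)
    have hs0 := summ_base
    have e1 : SS (n + 3/2) = 1 + ∑' k, tt (n + 3/2) (k + 1) := by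
      rw [SS, hs.tsum_eq_zero_add, tt_zero]
    have e2 : ∑' k, tt (3/2) (k+1) ≤ SS (3/2) := by
      rw [SS, hs0.tsum_eq_zero_add, tt_zero]; linarith
    have e3 : ∑' k, tt (n + 3/2) (k + 1) ≤ ∑' k, (3/2 * (1 / ((n:ℝ) + 1))) * tt (3/2) (k+1) := by
      refine Summable.tsum_le_tsum (fun k => ?_) ((summable_nat_add_iff 1).mpr hs)
        (((summable_nat_add_iff 1).mpr hs0).mul_left _)
      have h1 := ris_pos (a := 1/3) (by norm_num) (k+1)
      have h2 := ris_pos (a := 2/3) (by norm_num) (k+1)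
      have h3 := ris_pos (a := 3/2 + 1) (by norm_num) k
      have h4 := ris_mono (a := 3/2+1) (b := n + 3/2 + 1) (by norm_num) (by simp) k
      unfold tt
      rw [ris_succ' (n + 3/2), ris_succ' (3/2)]
      set P := ris (1/3) (k+1) * ris (2/3) (k+1)
      have hP : 0 < P := by positivity
      have : 3/2 * (1 / ((n:ℝ) + 1)) * (P / (3/2 * ris (3/2+1) k * ((k+1).factorial : ℝ)))
        = P / (((n:ℝ) + 1) * ris (3/2+1) k * ((k+1).factorial : ℝ)) := by
        field_simp
      rw [this]
      gcongr
      norm_num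
    rw [tsum_mul_left] at e3
    rw [e1]
    have : 3/2 * (1 / ((n:ℝ) + 1)) * ∑' k, tt (3/2) (k+1) ≤ 3/2 * (1 / ((n:ℝ) + 1)) * SS (3/2) := by
      gcongr
    linarith
  have hl : ∀ n : ℕ, 1 ≤ SS (n + 3/2) := by
    intro n
    have hs := summ_tt (c := n + 3/2) (by simp)
    have := hs.le_tsum 0 (fun k _ => (tt_pos (by positivity) k).le)
    rwa [tt_zero] at this
  refine tendsto_of_tendsto_of_tendsto_of_le_of_le tendsto_const_nhds ?_ hl hb
  have := ((tendsto_one_div_add_atTop_nhds_zero_nat (𝕜 := ℝ)).const_mul (3/2 * SS (3/2))).const_add 1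
  simpa using this

lemma SS_base : SS (3/2) = 3/2 := by
  have hp : ∀ N : ℕ, SS (3/2) * ∏ j ∈ Finset.range N, (1 - (1/2:ℝ)^2 / ((j:ℝ)+1)^2)
      = (∏ j ∈ Finset.range N, (1 - (1/6:ℝ)^2 / ((j:ℝ)+1)^2)) * SS (N + 3/2) := by
    intro N
    induction N with
    | zero => simp
    | succ N ih =>
      rw [Finset.prod_range_succ, Finset.prod_range_succ, ← mul_assoc, ih]
      have := gauss_rec (c := N + 3/2) (by simp)
      have e : ((N + 1 : ℕ) : ℝ) + 3/2 = N + 3/2 + 1 := by push_cast; ring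
      rw [e]
      have h0 : ((N:ℝ) + 1) ≠ 0 := by positivity
      have h1 : (1 - (1/2:ℝ)^2 / ((N:ℝ)+1)^2) * SS (N + 3/2)
        = (1 - (1/6:ℝ)^2 / ((N:ℝ)+1)^2) * SS (N + 3/2 + 1) := by
        generalize SS (N + 3/2 + 1) = u at *
        generalize SS (N + 3/2) = v at *
        field_simp
        linear_combination 144 * this
      linear_combination (∏ j ∈ Finset.range N, (1 - (1/6:ℝ)^2 / ((j:ℝ)+1)^2)) * h1
  have a1 := Real.tendsto_euler_sin_prod (1/2)
  have a2 := (Real.tendsto_euler_sin_prod (1/6)).mul SS_lim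
  have a3 := a1.const_mul (SS (3/2))
  have e1 : Real.sin (π * (1/2)) = 1 := by rw [mul_one_div]; simp
  have e2 : Real.sin (π * (1/6)) = 1/2 := by rw [mul_one_div]; simp
  rw [e1] at a3
  rw [e2] at a2
  have a4 := a2.const_mul 3
  have : ∀ N : ℕ, 3 * (π * (1/6) * (∏ j ∈ Finset.range N, (1 - (1/6:ℝ)^2 / ((j:ℝ)+1)^2)) * SS (N + 3/2))
     = SS (3/2) * (π * (1/2) * ∏ j ∈ Finset.range N, (1 - (1/2:ℝ)^2 / ((j:ℝ)+1)^2)) := by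
    intro N
    linear_combination (-π/2) * hp N
  simp only [this] at a4
  have := tendsto_nhds_unique a3 a4
  linarith

noncomputable def JJ (n : ℕ) : ℝ := SS (n + 3/2) / (n + 1/2)

lemma JJ_succ (n : ℕ) : JJ (n+1) = JJ n * ((1/2 + n)^2 / ((5/6 + n) * (7/6 + n))) := by
  have := gauss_rec (c := n + 3/2) (by simp)
  have e : ((n + 1 : ℕ) : ℝ) + 3/2 = n + 3/2 + 1 := by push_cast; ring
  have e1 : (n:ℝ) + 3/2 - 1 = n + 1/2 := by ring
  have e2 : (n:ℝ) + 3/2 - 1/3 = n + 7/6 := by ring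
  have e3 : (n:ℝ) + 3/2 - 2/3 = n + 5/6 := by ring
  rw [e1, e2, e3] at this
  have h : SS (n + 3/2 + 1) = (n + 3/2) * (n + 1/2) * SS (n + 3/2) / ((n + 7/6) * (n + 5/6)) := by
    rw [this, mul_div_cancel_left₀]; positivity
  unfold JJ
  rw [e, h]
  push_cast
  have e4 : (n:ℝ) + 1 + 1/2 = n + 3/2 := by ring
  rw [e4, add_comm (1/2 : ℝ), add_comm (5/6 : ℝ), add_comm (7/6 : ℝ)]
  have h1 : (n:ℝ) + 1/2 ≠ 0 := by positivity
  have h2 : (n:ℝ) + 3/2 ≠ 0 := by positivity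
  have h3 : (n:ℝ) + 7/6 ≠ 0 := by positivity
  have h4 : (n:ℝ) + 5/6 ≠ 0 := by positivity
  generalize SS (n + 3/2) = s
  generalize (n:ℝ) + 1/2 = a at *
  generalize (n:ℝ) + 3/2 = b at *
  generalize (n:ℝ) + 7/6 = c at *
  generalize (n:ℝ) + 5/6 = d at *
  field_simp

lemma JJ_zero : JJ 0 = 3 := by
  unfold JJ; simp only [Nat.cast_zero, zero_add, SS_base]; norm_num

lemma JJ_eq (n : ℕ) : JJ n = 3 * (ris (1/2) n ^ 2 / (ris (5/6) n * ris (7/6) n)) := by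
  induction n with
  | zero => simp [JJ_zero, ris_zero]
  | succ n ih =>
    rw [JJ_succ, ih, ris_succ, ris_succ, ris_succ, mul_pow, mul_assoc, div_mul_div_comm]
    congr 2
    ring

lemma JJ_nonneg (n : ℕ) : 0 ≤ JJ n := by
  rw [JJ_eq]
  have h1 := ris_pos (a := 5/6) (by norm_num) n
  have h2 := ris_pos (a := 7/6) (by norm_num) n
  positivity

lemma JJ_le (n : ℕ) : JJ n ≤ 3 / (n + 1) := by
  induction n with
  | zero => simp [JJ_zero]
  | succ n ih =>
    rw [JJ_succ]
    calc _ ≤ (3 / ((n:ℝ) + 1)) * ((1/2 + n)^2 / ((5/6 + n) * (7/6 + n))) := by gcongr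
      _ ≤ _ := by
        push_cast
        rw [div_mul_div_comm, div_le_div_iff₀ (by positivity) (by positivity)]
        have : (0:ℝ) ≤ n := by positivity
        nlinarith

lemma summ_AJ : Summable fun n => tt 1 n * JJ n := by
  have h : Summable fun k : ℕ => 1 / ((k:ℝ)) ^ 2 :=
    Real.summable_one_div_nat_pow.mpr (by norm_num)
  have h' := ((summable_nat_add_iff 1).mpr h).mul_left 3
  refine Summable.of_nonneg_of_le (fun k => mul_nonneg (tt_pos (by norm_num) k).le (JJ_nonneg k))
    (fun k => ?_) h'
  calc _ ≤ (1 / ((k:ℝ) + 1)) * (3 / (k + 1)) :=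
        mul_le_mul (tt_one_le k) (JJ_le k) (JJ_nonneg k) (by positivity)
    _ = _ := by push_cast; field_simp

noncomputable def gg (n k : ℕ) (x : ℝ) : ℝ := (1 - x) ^ n * x ^ k / √(1 - x)

lemma gg_eq (n k : ℕ) {x : ℝ} (hx : x ∈ Ioo (0:ℝ) 1) :
    (x : ℂ) ^ (((k:ℂ) + 1) - 1) * (1 - (x : ℂ)) ^ (((n:ℂ) + 1/2) - 1) = ((gg n k x : ℝ) : ℂ) := by
  have h1 : 0 < 1 - x := by linarith [hx.2]
  have e1 : ((n:ℂ) + 1/2) - 1 = (((n:ℝ) - 1/2 : ℝ) : ℂ) := by push_cast; ring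
  have e2 : (1 - (x:ℂ)) = ((1 - x : ℝ) : ℂ) := by push_cast; ring
  rw [e1, e2, ← Complex.ofReal_cpow h1.le, Real.rpow_sub h1, Real.rpow_natCast, add_sub_cancel_right,
    Complex.cpow_natCast, ← Real.sqrt_eq_rpow]
  unfold gg
  push_cast
  ring

lemma gg_int (n k : ℕ) : IntegrableOn (gg n k) (Ioo 0 1) := by
  have h := Complex.betaIntegral_convergent (u := (k:ℂ) + 1) (v := (n:ℂ) + 1/2)
    (by simp; positivity) (by simp; positivity)
  rw [intervalIntegrable_iff_integrableOn_Ioo_of_le zero_le_one] at h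
  have h2 := (h.congr_fun (fun x hx => gg_eq n k hx) measurableSet_Ioo).re
  simpa [IntegrableOn] using h2

lemma gg_integral (n k : ℕ) : ∫ x in Ioo (0:ℝ) 1, gg n k x
    = k.factorial / ((n + 1/2) * ris (n + 3/2) k) := by
  have h := Complex.betaIntegral_eval_nat_add_one_right (u := (n:ℂ) + 1/2) (by simp; positivity) k
  rw [← Complex.betaIntegral_symm, Complex.betaIntegral, intervalIntegral.integral_of_le zero_le_one,
    integral_Ioc_eq_integral_Ioo, setIntegral_congr_fun measurableSet_Ioo
      (fun x hx => gg_eq n k hx), integral_complex_ofReal] at h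
  have e : (n:ℝ) + 3/2 = n + 1/2 + 1 := by ring
  rw [e, ← ris_succ']
  unfold ris
  apply Complex.ofReal_injective
  rw [h]
  push_cast
  rfl

lemma gg_nonneg (n k : ℕ) {x : ℝ} (hx : x ∈ Ioo (0:ℝ) 1) : 0 ≤ gg n k x := by
  have h1 : 0 < 1 - x := by linarith [hx.2]
  have h2 := hx.1
  unfold gg; positivity

lemma coef (n k : ℕ) : tt 1 k * (k.factorial / ((n + 1/2) * ris (n + 3/2) k))
    = tt (n + 3/2) k / (n + 1/2) := by
  unfold tt
  rw [ris_one]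
  have := (ris_pos (a := n + 3/2) (by positivity) k).ne'
  have h1 : (n:ℝ) + 1/2 ≠ 0 := by positivity
  generalize (n:ℝ) + 1/2 = a at *
  field_simp

lemma pFq_two (x : ℝ) : pFq [1/3, 2/3] [1] x = ∑' n, tt 1 n * x ^ n := by
  unfold pFq tt
  congr 1; ext n
  simp only [List.map_cons, List.map_nil, List.prod_cons, List.prod_nil, mul_one]
  rw [div_mul_eq_div_div]
  ring

lemma summ_F {x : ℝ} (h0 : 0 < x) (h1 : x < 1) : Summable fun n => tt 1 n * x ^ n := by
  refine Summable.of_nonneg_of_le (fun k => mul_nonneg (tt_pos (by norm_num) k).le (by positivity))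
    (fun k => ?_) (summable_geometric_of_lt_one h0.le h1)
  have : tt 1 k ≤ 1 := (tt_one_le k).trans (by
    rw [div_le_one (by positivity)]; linarith [show (0:ℝ) ≤ k by positivity])
  exact mul_le_of_le_one_left (by positivity) this

theorem broadhurst_integral_4F3 :
    (∫ x in (0:ℝ)..1,
        pFq [1/3, 2/3] [1] x * pFq [1/3, 2/3] [1] (1 - x) / Real.sqrt (1 - x))
    = 3 * pFq [1/3, 1/2, 1/2, 2/3] [5/6, 1, 7/6] 1 := by
  let f : ℕ × ℕ → ℝ → ℝ := fun p x => (tt 1 p.1 * tt 1 p.2) * gg p.1 p.2 x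
  have hA : ∀ k, 0 ≤ tt 1 k := fun k => (tt_pos (by norm_num) k).le
  have hpt : ∀ x ∈ Ioo (0:ℝ) 1,
      pFq [1/3, 2/3] [1] x * pFq [1/3, 2/3] [1] (1 - x) / Real.sqrt (1 - x) = ∑' p, f p x := by
    intro x hx
    have h1 := summ_F hx.1 hx.2
    have h2 := summ_F (x := 1 - x) (by linarith [hx.2]) (by linarith [hx.1])
    rw [mul_comm, pFq_two, pFq_two, tsum_mul_tsum_of_summable_norm h2.norm h1.norm, ← tsum_div_const]
    refine tsum_congr fun p => ?_
    simp only [f, gg]; ring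
  have hint : ∀ p, Integrable (f p) (volume.restrict (Ioo (0:ℝ) 1)) := fun p =>
    (gg_int p.1 p.2).const_mul _
  have hval : ∀ p, ∫ x in Ioo (0:ℝ) 1, f p x = tt 1 p.1 * (tt (p.1 + 3/2) p.2 / (p.1 + 1/2)) := by
    intro p
    simp only [f]
    rw [integral_const_mul, gg_integral, mul_assoc, coef]
  have hnorm : ∀ p, ∫ x in Ioo (0:ℝ) 1, ‖f p x‖ = ∫ x in Ioo (0:ℝ) 1, f p x := by
    intro p
    refine setIntegral_congr_fun measurableSet_Ioo fun x hx => ?_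
    exact Real.norm_of_nonneg (mul_nonneg (mul_nonneg (hA _) (hA _)) (gg_nonneg _ _ hx))
  have hrow : ∀ n : ℕ, HasSum (fun k => tt 1 n * (tt (n + 3/2) k / (n + 1/2))) (tt 1 n * JJ n) :=
    fun n => ((summ_tt (c := n + 3/2) (by simp)).hasSum.div_const _).mul_left _
  have hsum : Summable fun p : ℕ × ℕ => tt 1 p.1 * (tt (p.1 + 3/2) p.2 / (p.1 + 1/2)) := by
    refine (summable_prod_of_nonneg fun p => ?_).mpr ⟨fun n => (hrow n).summable, ?_⟩
    · have := tt_pos (c := p.1 + 3/2) (by positivity) p.2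
      exact mul_nonneg (hA _) (by positivity)
    · simpa only [(hrow _).tsum_eq] using summ_AJ
  have key := hasSum_integral_of_summable_integral_norm hint (by simpa only [hnorm, hval] using hsum)
  rw [intervalIntegral.integral_of_le zero_le_one, integral_Ioc_eq_integral_Ioo,
    setIntegral_congr_fun measurableSet_Ioo hpt, ← key.tsum_eq]
  simp only [hval]
  rw [hsum.tsum_prod' fun n => (hrow n).summable]
  simp only [(hrow _).tsum_eq]
  unfold pFq
  rw [← tsum_mul_left]
  refine tsum_congr fun n => ?_
  rw [JJ_eq]
  unfold tt
  simp only [List.map_cons, List.map_nil, List.prod_cons, List.prod_nil, mul_one, one_pow]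
  have h1 := (ris_pos (a := 5/6) (by norm_num) n).ne'
  have h2 := (ris_pos (a := 7/6) (by norm_num) n).ne'
  have h3 := (ris_pos (a := 1) (by norm_num) n).ne'
  field_simp
end
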